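/- arXiv:1403.5413 — 2 statements merged into one kernel-verified Lean document; each statement's English description precedes it below -/
import Mathlib

section
/- Let a < b and let f, g : [a;b] → ℝ be regulated functions with no common points of discontinuity. Let (η_k)_{k≥0} and (θ_k)_{k≥0} be nonincreasing sequences of non-negative reals with η_k → 0 and θ_k → 0 as k → ∞. Set η_{-1} := sup_{a≤t≤b} |f(t) − f(a)| and S := Σ_{k=0}^{∞} 2^k · η_{k−1} · TV^{θ_k}(g,[a;b]) + Σ_{k=0}^{∞} 2^k · θ_k · TV^{η_k}(f,[a;b]). If S < +∞, then the Riemann–Stieltjes integral ∫_a^b f dg exists and |∫_a^b f dg − f(a)·(g(b) − g(a))| ≤ S. -/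
open Filter Set

/-- Truncated variation of `f` on `[a;b]` with truncation parameter `δ`. -/
noncomputable def truncVar (f : ℝ → ℝ) (δ a b : ℝ) : ENNReal :=
  ⨆ (n : ℕ) (t : Fin (n + 1) → ℝ) (_ : StrictMono t)
    (_ : ∀ i, t i ∈ Set.Icc a b),
    ∑ i : Fin n, ENNReal.ofReal (|f (t i.succ) - f (t i.castSucc)| - δ)

/-- p-variation of `f` on `[a;b]`. -/
noncomputable def pVar (f : ℝ → ℝ) (p a b : ℝ) : ENNReal :=
  ⨆ (n : ℕ) (t : Fin (n + 1) → ℝ) (_ : StrictMono t)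
    (_ : ∀ i, t i ∈ Set.Icc a b),
    ∑ i : Fin n, ENNReal.ofReal (|f (t i.succ) - f (t i.castSucc)| ^ p)

/-- The p-variation norm `(V^p(f,[a;b]))^{1/p}`. -/
noncomputable def pVarNorm (f : ℝ → ℝ) (p a b : ℝ) : ℝ :=
  (pVar f p a b).toReal ^ (1 / p)

/-- Oscillation norm `sup_{a ≤ s < t ≤ b} |f t - f s|`. -/
noncomputable def oscNorm (f : ℝ → ℝ) (a b : ℝ) : ℝ :=
  sSup {x | ∃ s ∈ Set.Icc a b, ∃ t ∈ Set.Icc a b, s < t ∧ x = |f t - f s|}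

/-- Sup norm `sup_{a ≤ t ≤ b} |f t|`. -/
noncomputable def supNorm (f : ℝ → ℝ) (a b : ℝ) : ℝ :=
  sSup {x | ∃ t ∈ Set.Icc a b, x = |f t|}

/-- `I` is the Riemann–Stieltjes integral `∫_a^b f dg`. -/
def RSIntegral (f g : ℝ → ℝ) (a b : ℝ) (I : ℝ) : Prop :=
  ∀ ε > (0 : ℝ), ∃ δ > (0 : ℝ), ∀ (n : ℕ) (t : Fin (n + 1) → ℝ) (ξ : Fin n → ℝ),
    StrictMono t → t 0 = a → t (Fin.last n) = b →
    (∀ i : Fin n, t i.castSucc ≤ ξ i ∧ ξ i ≤ t i.succ) →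
    (∀ i : Fin n, t i.succ - t i.castSucc < δ) →
    |∑ i : Fin n, f (ξ i) * (g (t i.succ) - g (t i.castSucc)) - I| < ε

/-- `f` is regulated on `[a;b]`: all the relevant one-sided limits exist and are finite. -/
def Regulated (f : ℝ → ℝ) (a b : ℝ) : Prop :=
  (∃ L : ℝ, Tendsto f (nhdsWithin a (Set.Ioi a)) (nhds L)) ∧
  (∃ L : ℝ, Tendsto f (nhdsWithin b (Set.Iio b)) (nhds L)) ∧
  ∀ x ∈ Set.Ioo a b,
    (∃ L : ℝ, Tendsto f (nhdsWithin x (Set.Iio x)) (nhds L)) ∧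
    (∃ L : ℝ, Tendsto f (nhdsWithin x (Set.Ioi x)) (nhds L))

/-- `f` and `g` have no common points of discontinuity on `[a;b]`. -/
def NoCommonDiscont (f g : ℝ → ℝ) (a b : ℝ) : Prop :=
  ∀ x ∈ Set.Icc a b,
    ContinuousWithinAt f (Set.Icc a b) x ∨ ContinuousWithinAt g (Set.Icc a b) x

inductive Ach (x : ℕ → ℝ) (δ : ℝ) : ℕ → ℝ → Prop
  | base (i : ℕ) : Ach x δ i 0
  | step (i j : ℕ) (v : ℝ) : Ach x δ i v → i < j → Ach x δ j (v + max (|x j - x i| - δ) 0)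

noncomputable def dT (x : ℕ → ℝ) (δ : ℝ) (m : ℕ) : ENNReal :=
  ⨆ (j : ℕ) (v : ℝ) (_ : j ≤ m) (_ : Ach x δ j v), ENNReal.ofReal v

noncomputable def tvs (x : ℕ → ℝ) (m : ℕ) : ℝ := ∑ i ∈ Finset.range m, |x (i + 1) - x i|

lemma Ach.le_dT {x : ℕ → ℝ} {δ : ℝ} {m j : ℕ} {v : ℝ} (h : Ach x δ j v) (hj : j ≤ m) :
    ENNReal.ofReal v ≤ dT x δ m :=
  le_iSup_of_le j (le_iSup_of_le v (le_iSup_of_le hj (le_iSup_of_le h le_rfl)))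

lemma Ach.nonneg {x : ℕ → ℝ} {δ : ℝ} {j : ℕ} {v : ℝ} (h : Ach x δ j v) : 0 ≤ v := by
  induction h with
  | base i => exact le_rfl
  | step i j v h hij ih => exact add_nonneg ih (le_max_right _ _)

lemma tvs_nonneg (y : ℕ → ℝ) (m : ℕ) : 0 ≤ tvs y m :=
  Finset.sum_nonneg fun _ _ => abs_nonneg _

lemma tvs_diff (y : ℕ → ℝ) {i j : ℕ} (h : i ≤ j) : |y j - y i| ≤ tvs y j - tvs y i := by
  induction j, h using Nat.le_induction with
  | base => simp
  | succ k hk ih =>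
    have e : tvs y (k + 1) = tvs y k + |y (k + 1) - y k| := by
      unfold tvs; rw [Finset.sum_range_succ]
    have := abs_sub_le (y (k + 1)) (y k) (y i)
    rw [e]; linarith

lemma tvs_mono (y : ℕ → ℝ) {i j : ℕ} (h : i ≤ j) : tvs y i ≤ tvs y j := by
  have := tvs_diff y h
  have := abs_nonneg (y j - y i)
  linarith

lemma Ach.triangle {x y : ℕ → ℝ} {δ : ℝ} {j : ℕ} {v : ℝ} (h : Ach (x - y) δ j v) :
    ∃ v', Ach x δ j v' ∧ v ≤ v' + tvs y j := by
  induction h with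
  | base i => exact ⟨0, Ach.base i, by simpa using tvs_nonneg y i⟩
  | step i j v h hij ih =>
    obtain ⟨v', h1, h2⟩ := ih
    refine ⟨_, Ach.step i j v' h1 hij, ?_⟩
    have h3 := tvs_diff y hij.le
    have h4 : |(x - y) j - (x - y) i| ≤ |x j - x i| + |y j - y i| := by
      have := abs_sub (x j - x i) (y j - y i)
      simp only [Pi.sub_apply]
      rw [show x j - y j - (x i - y i) = (x j - x i) - (y j - y i) by ring]
      exact this
    have h5 : max (|(x - y) j - (x - y) i| - δ) 0 ≤ max (|x j - x i| - δ) 0 + |y j - y i| := by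
      apply max_le
      · linarith [le_max_left (|x j - x i| - δ) 0]
      · positivity
    linarith

lemma dT_sub_le (x y : ℕ → ℝ) (δ : ℝ) (m : ℕ) :
    dT (x - y) δ m ≤ dT x δ m + ENNReal.ofReal (tvs y m) := by
  refine iSup_le fun j => iSup_le fun v => iSup_le fun hj => iSup_le fun h => ?_
  obtain ⟨v', h1, h2⟩ := h.triangle
  calc ENNReal.ofReal v ≤ ENNReal.ofReal (v' + tvs y m) :=
        ENNReal.ofReal_le_ofReal (by linarith [tvs_mono y hj])
    _ ≤ ENNReal.ofReal v' + ENNReal.ofReal (tvs y m) := ENNReal.ofReal_add_le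
    _ ≤ _ := by gcongr; exact h1.le_dT hj

lemma Ach.anti {x : ℕ → ℝ} {δ δ' : ℝ} (hd : δ' ≤ δ) {j : ℕ} {v : ℝ} (h : Ach x δ j v) :
    ∃ v', Ach x δ' j v' ∧ v ≤ v' := by
  induction h with
  | base i => exact ⟨0, Ach.base i, le_rfl⟩
  | step i j v h hij ih =>
    obtain ⟨v', h1, h2⟩ := ih
    exact ⟨_, Ach.step i j v' h1 hij, by gcongr⟩

lemma dT_anti (x : ℕ → ℝ) {δ δ' : ℝ} (hd : δ' ≤ δ) (m : ℕ) : dT x δ m ≤ dT x δ' m := by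
  refine iSup_le fun j => iSup_le fun v => iSup_le fun hj => iSup_le fun h => ?_
  obtain ⟨v', h1, h2⟩ := h.anti hd
  exact (ENNReal.ofReal_le_ofReal h2).trans (h1.le_dT hj)

/-- play operator -/
noncomputable def play (x : ℕ → ℝ) (θ y0 : ℝ) : ℕ → ℝ
  | 0 => y0
  | (i + 1) => max (x (i + 1) - θ / 2) (min (x (i + 1) + θ / 2) (play x θ y0 i))

lemma play_near (x : ℕ → ℝ) {θ y0 : ℝ} (hθ : 0 ≤ θ) (h0 : |x 0 - y0| ≤ θ / 2) (i : ℕ) :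
    |x i - play x θ y0 i| ≤ θ / 2 := by
  cases i with
  | zero => exact h0
  | succ i =>
    rw [play, abs_le]
    constructor
    · have : max (x (i + 1) - θ / 2) (min (x (i + 1) + θ / 2) (play x θ y0 i)) ≤ x (i+1) + θ / 2 :=
        max_le (by linarith) (min_le_left _ _)
      linarith
    · have := le_max_left (x (i + 1) - θ / 2) (min (x (i + 1) + θ / 2) (play x θ y0 i))
      linarith

lemma play_step (x : ℕ → ℝ) {θ : ℝ} (y0 : ℝ) (hθ : 0 ≤ θ) (i : ℕ) :
    (play x θ y0 (i + 1) = play x θ y0 i ∧ |x (i + 1) - play x θ y0 i| ≤ θ / 2) ∨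
    (play x θ y0 i < play x θ y0 (i + 1) ∧ play x θ y0 (i + 1) = x (i + 1) - θ / 2) ∨
    (play x θ y0 (i + 1) < play x θ y0 i ∧ play x θ y0 (i + 1) = x (i + 1) + θ / 2) := by
  rw [play]
  generalize play x θ y0 i = y
  rcases lt_or_ge y (x (i + 1) - θ / 2) with h | h
  · right; left
    rw [min_eq_right (by linarith), max_eq_left h.le]
    exact ⟨h, rfl⟩
  · rcases lt_or_ge (x (i + 1) + θ / 2) y with h' | h'
    · right; right
      rw [min_eq_left h'.le, max_eq_right (by linarith)]
      exact ⟨h', rfl⟩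
    · left
      rw [min_eq_right h', max_eq_right h]
      exact ⟨rfl, abs_le.2 ⟨by linarith, by linarith⟩⟩

lemma tvs_succ (y : ℕ → ℝ) (m : ℕ) : tvs y (m + 1) = tvs y m + |y (m + 1) - y m| := by
  unfold tvs; rw [Finset.sum_range_succ]

lemma play_const (x : ℕ → ℝ) {θ y0 : ℝ} (m : ℕ)
    (h : ∀ i ≤ m, |x i - y0| ≤ θ / 2) : ∀ i ≤ m, play x θ y0 i = y0 := by
  intro i
  induction i with
  | zero => intro _; rfl
  | succ i ih =>
    intro hi
    rw [play, ih (by omega)]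
    have := abs_le.1 (h _ hi)
    rw [min_eq_right (by linarith), max_eq_right (by linarith)]

lemma tvs_const {y : ℕ → ℝ} {c : ℝ} {m : ℕ} (h : ∀ i ≤ m, y i = c) : tvs y m = 0 := by
  unfold tvs
  apply Finset.sum_eq_zero
  intro i hi
  have := Finset.mem_range.1 hi
  rw [h _ (by omega), h _ (by omega)]; simp

lemma play_exists_aux (x : ℕ → ℝ) {θ : ℝ} (hθ : 0 ≤ θ) (m : ℕ) :
    (∀ i ≤ m, ∀ j ≤ m, x i - x j ≤ θ) ∨
    ∃ y0, |x 0 - y0| ≤ θ / 2 ∧ ∃ k l v, Ach x θ k v ∧ k < l ∧ l ≤ m ∧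
      tvs (play x θ y0) m ≤ v + (|x l - x k| - θ) ∧
      ((θ ≤ x l - x k ∧ play x θ y0 m = x l - θ / 2) ∨
       (θ ≤ x k - x l ∧ play x θ y0 m = x l + θ / 2)) := by
  induction m with
  | zero =>
    left; intro i hi j hj
    obtain rfl : i = 0 := by omega
    obtain rfl : j = 0 := by omega
    simpa using hθ
  | succ m ih =>
    rcases ih with ih | ⟨y0, h0, k, l, v, hA, hkl, hlm, htv, hup⟩
    · by_cases hall : ∀ i ≤ m, |x (m + 1) - x i| ≤ θ
      · left
        intro i hi j hj
        rcases Nat.lt_or_ge m i with h1 | h1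
        · obtain rfl : i = m + 1 := by omega
          rcases Nat.lt_or_ge m j with h2 | h2
          · obtain rfl : j = m + 1 := by omega
            simpa using hθ
          · exact (abs_le.1 (hall j h2)).2
        · rcases Nat.lt_or_ge m j with h2 | h2
          · obtain rfl : j = m + 1 := by omega
            linarith [(abs_le.1 (hall i h1)).1]
          · exact ih i h1 j h2
      · right
        push Not at hall
        obtain ⟨i, hi, hgt⟩ := hall
        rcases lt_abs.1 hgt with h | h
        · obtain ⟨j, hj, hmin⟩ := Finset.exists_min_image (Finset.range (m + 1)) x ⟨0, by simp⟩
          have hjm : j ≤ m := by simpa [Nat.lt_succ_iff] using hj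
          have hmin' : ∀ i ≤ m, x j ≤ x i := fun i hi =>
            hmin i (by simpa [Nat.lt_succ_iff] using hi)
          have hn : ∀ i ≤ m, |x i - (x j + θ / 2)| ≤ θ / 2 := fun i hi =>
            abs_le.2 ⟨by linarith [hmin' i hi], by linarith [ih i hi j hjm]⟩
          have hc := play_const x m hn
          have hji := hmin' i hi
          have hy : play x θ (x j + θ / 2) (m + 1) = x (m + 1) - θ / 2 := by
            rw [play, hc m le_rfl, min_eq_right (by linarith), max_eq_left (by linarith)]
          refine ⟨x j + θ / 2, hn 0 (by omega), j, m + 1, 0, Ach.base j, by omega, le_rfl, ?_, ?_⟩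
          · rw [tvs_succ, tvs_const hc, hy, hc m le_rfl, abs_of_nonneg (by linarith),
              abs_of_nonneg (by linarith)]
            linarith
          · left; exact ⟨by linarith, hy⟩
        · obtain ⟨j, hj, hmin⟩ := Finset.exists_max_image (Finset.range (m + 1)) x ⟨0, by simp⟩
          have hjm : j ≤ m := by simpa [Nat.lt_succ_iff] using hj
          have hmin' : ∀ i ≤ m, x i ≤ x j := fun i hi =>
            hmin i (by simpa [Nat.lt_succ_iff] using hi)
          have hn : ∀ i ≤ m, |x i - (x j - θ / 2)| ≤ θ / 2 := fun i hi =>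
            abs_le.2 ⟨by linarith [ih j hjm i hi], by linarith [hmin' i hi]⟩
          have hc := play_const x m hn
          have hji := hmin' i hi
          have hy : play x θ (x j - θ / 2) (m + 1) = x (m + 1) + θ / 2 := by
            rw [play, hc m le_rfl, min_eq_left (by linarith), max_eq_right (by linarith)]
          refine ⟨x j - θ / 2, hn 0 (by omega), j, m + 1, 0, Ach.base j, by omega, le_rfl, ?_, ?_⟩
          · rw [tvs_succ, tvs_const hc, hy, hc m le_rfl, abs_of_nonpos (by linarith),
              abs_of_nonpos (by linarith)]
            linarith
          · right; exact ⟨by linarith, hy⟩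
    · right
      refine ⟨y0, h0, ?_⟩
      have hs := play_step x y0 hθ m
      have hstep : ∀ w, w = |x l - x k| - θ → 0 ≤ w → Ach x θ l (v + w) := by
        intro w hw hw0
        have := Ach.step k l v hA hkl
        rwa [max_eq_left (by linarith), ← hw] at this
      rw [tvs_succ]
      rcases hs with ⟨e, -⟩ | ⟨hlt, e⟩ | ⟨hlt, e⟩
      · refine ⟨k, l, v, hA, hkl, by omega, ?_, ?_⟩
        · rw [e]; simpa using htv
        · rw [e]; exact hup
      · rcases hup with ⟨h1, h2⟩ | ⟨h1, h2⟩
        · refine ⟨k, m + 1, v, hA, by omega, le_rfl, ?_, Or.inl ⟨by linarith, e⟩⟩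
          rw [abs_of_nonneg (by linarith : 0 ≤ x l - x k)] at htv
          rw [e, h2, abs_of_nonneg (by linarith), abs_of_nonneg (by linarith)]
          linarith
        · refine ⟨l, m + 1, _, hstep _ rfl (by rw [abs_of_nonpos (by linarith)]; linarith),
            by omega, le_rfl, ?_, Or.inl ⟨by linarith, e⟩⟩
          have : |play x θ y0 (m + 1) - play x θ y0 m| = |x (m + 1) - x l| - θ := by
            rw [abs_of_nonneg (by linarith), abs_of_nonneg (by linarith)]; linarith
          linarith
      · rcases hup with ⟨h1, h2⟩ | ⟨h1, h2⟩
        · refine ⟨l, m + 1, _, hstep _ rfl (by rw [abs_of_nonneg (by linarith)]; linarith),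
            by omega, le_rfl, ?_, Or.inr ⟨by linarith, e⟩⟩
          have : |play x θ y0 (m + 1) - play x θ y0 m| = |x (m + 1) - x l| - θ := by
            rw [abs_of_nonpos (by linarith), abs_of_nonpos (by linarith)]; linarith
          linarith
        · refine ⟨k, m + 1, v, hA, by omega, le_rfl, ?_, Or.inr ⟨by linarith, e⟩⟩
          rw [abs_of_nonpos (by linarith : x l - x k ≤ 0)] at htv
          rw [e, h2, abs_of_nonpos (by linarith), abs_of_nonpos (by linarith)]
          linarith

lemma play_exists (x : ℕ → ℝ) {θ : ℝ} (hθ : 0 ≤ θ) (m : ℕ) :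
    ∃ y0, |x 0 - y0| ≤ θ / 2 ∧ ENNReal.ofReal (tvs (play x θ y0) m) ≤ dT x θ m := by
  rcases play_exists_aux x hθ m with ih | ⟨y0, h0, k, l, v, hA, hkl, hlm, htv, hup⟩
  · obtain ⟨j, hj, hmin⟩ := Finset.exists_min_image (Finset.range (m + 1)) x ⟨0, by simp⟩
    have hjm : j ≤ m := by simpa [Nat.lt_succ_iff] using hj
    have hmin' : ∀ i ≤ m, x j ≤ x i := fun i hi =>
      hmin i (by simpa [Nat.lt_succ_iff] using hi)
    have hn : ∀ i ≤ m, |x i - (x j + θ / 2)| ≤ θ / 2 := fun i hi =>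
      abs_le.2 ⟨by linarith [hmin' i hi], by linarith [ih i hi j hjm]⟩
    refine ⟨_, hn 0 (by omega), ?_⟩
    rw [tvs_const (play_const x m hn)]; simp
  · refine ⟨y0, h0, ?_⟩
    refine le_trans (ENNReal.ofReal_le_ofReal ?_) ((Ach.step k l v hA hkl).le_dT hlm)
    linarith [le_max_left (|x l - x k| - θ) 0]

/-- local variation of the play -/
lemma play_local (x : ℕ → ℝ) {θ y0 w c : ℝ} (hθ : 0 ≤ θ) (h0 : |x 0 - y0| ≤ θ / 2) (hw : w ≤ θ)
    {p q : ℕ} (hpq : p ≤ q) (hx : ∀ i, p ≤ i → i ≤ q → c ≤ x i ∧ x i ≤ c + w) :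
    ∑ i ∈ Finset.Ico p q, |play x θ y0 (i + 1) - play x θ y0 i| ≤ w := by
  set y := play x θ y0 with hy
  have key : ∀ q, p ≤ q → (∀ i, p ≤ i → i ≤ q → c ≤ x i ∧ x i ≤ c + w) →
      ∑ i ∈ Finset.Ico p q, |y (i + 1) - y i| +
        (max (c + w - θ / 2 - y q) 0 + max (y q - (c + θ / 2)) 0) ≤ 
        (max (c + w - θ / 2 - y p) 0 + max (y p - (c + θ / 2)) 0) := by
    intro q hq
    induction q, hq using Nat.le_induction with
    | base => intro _; simp
    | succ k hk ih =>
      intro hx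
      have ih := ih fun i h1 h2 => hx i h1 (by omega)
      rw [Finset.sum_Ico_succ_top hk]
      obtain ⟨ha, hb⟩ := hx (k + 1) (by omega) le_rfl
      rcases play_step x y0 hθ k with ⟨e, -⟩ | ⟨hlt, e⟩ | ⟨hlt, e⟩
      · rw [← hy] at e; rw [e]; simpa using ih
      · rw [← hy] at e hlt
        rw [abs_of_pos (by linarith), max_eq_left (by linarith : 0 ≤ c + w - θ / 2 - y (k + 1)),
          max_eq_right (by linarith : y (k + 1) - (c + θ / 2) ≤ 0)]
        linarith [le_max_left (c + w - θ / 2 - y k) 0, le_max_right (y k - (c + θ / 2)) 0]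
      · rw [← hy] at e hlt
        rw [abs_of_neg (by linarith), max_eq_right (by linarith : c + w - θ / 2 - y (k + 1) ≤ 0),
          max_eq_left (by linarith : 0 ≤ y (k + 1) - (c + θ / 2))]
        linarith [le_max_right (c + w - θ / 2 - y k) 0, le_max_left (y k - (c + θ / 2)) 0]
  have h1 := key q hpq hx
  have h2 := abs_le.1 (play_near x hθ h0 p)
  rw [← hy] at h2
  obtain ⟨ha, hb⟩ := hx p le_rfl hpq
  have h3 : max (c + w - θ / 2 - y p) 0 + max (y p - (c + θ / 2)) 0 ≤ w := by
    rcases max_cases (c + w - θ / 2 - y p) 0 with ⟨e1, _⟩ | ⟨e1, _⟩ <;>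
    rcases max_cases (y p - (c + θ / 2)) 0 with ⟨e2, _⟩ | ⟨e2, _⟩ <;> rw [e1, e2] <;> linarith
  linarith [le_max_right (c + w - θ / 2 - y q) 0, le_max_right (y q - (c + θ / 2)) 0]

noncomputable def Bf (m : ℕ) (σ τ : ℕ → ℕ) (F G : ℕ → ℝ) : ℝ :=
  ∑ j ∈ Finset.range m, (F (σ j) - F (τ j)) * (G (j + 1) - G j)

lemma Bf_le1 (m : ℕ) (σ τ : ℕ → ℕ) (F G : ℕ → ℝ) (e : ℝ)
    (h : ∀ j < m, |F (σ j) - F (τ j)| ≤ e) : |Bf m σ τ F G| ≤ e * tvs G m := by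
  unfold Bf tvs
  rw [Finset.mul_sum]
  refine (Finset.abs_sum_le_sum_abs _ _).trans (Finset.sum_le_sum fun j hj => ?_)
  rw [abs_mul]
  exact mul_le_mul_of_nonneg_right (h j (Finset.mem_range.1 hj)) (abs_nonneg _)

lemma cut_exists (m : ℕ) (σ : ℕ → ℕ) (hσ : ∀ i j, i ≤ j → j < m → σ i ≤ σ j) (u : ℕ) :
    ∃ A ≤ m, ∀ j < m, (u < σ j ↔ A ≤ j) := by
  classical
  by_cases h : ∃ j, j < m ∧ u < σ j
  · refine ⟨Nat.find h, (Nat.find_spec h).1.le, fun j hj => ⟨fun h' => Nat.find_min' h ⟨hj, h'⟩,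
      fun h' => (Nat.find_spec h).2.trans_le (hσ _ _ h' hj)⟩⟩
  · push Not at h
    exact ⟨m, le_rfl, fun j hj => ⟨fun h' => absurd h' (not_lt.2 (h j hj)), fun h' => by omega⟩⟩

lemma cut_sum (m : ℕ) (G : ℕ → ℝ) (A : ℕ) (hA : A ≤ m) (σ : ℕ → ℕ) (u : ℕ)
    (h : ∀ j < m, (u < σ j ↔ A ≤ j)) :
    ∑ j ∈ Finset.range m, (if u < σ j then (1:ℝ) else 0) * (G (j + 1) - G j) = G m - G A := by
  rw [← Finset.sum_range_add_sum_Ico _ hA]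
  rw [Finset.sum_eq_zero, zero_add, ← Finset.sum_Ico_sub G hA]
  · refine Finset.sum_congr rfl fun j hj => ?_
    obtain ⟨h1, h2⟩ := Finset.mem_Ico.1 hj
    rw [if_pos ((h j h2).2 h1), one_mul]
  · intro j hj
    have := Finset.mem_range.1 hj
    rw [if_neg, zero_mul]
    rw [h j (by omega)]; omega

lemma F_expand (F : ℕ → ℝ) (m k : ℕ) (hk : k ≤ m) :
    F k = F 0 + ∑ u ∈ Finset.range m, (F (u + 1) - F u) * (if u < k then (1:ℝ) else 0) := by
  rw [← Finset.sum_range_add_sum_Ico _ hk]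
  have h1 : ∑ u ∈ Finset.Ico k m, (F (u + 1) - F u) * (if u < k then (1:ℝ) else 0) = 0 := by
    apply Finset.sum_eq_zero; intro j hj
    have := Finset.mem_Ico.1 hj
    rw [if_neg (by omega), mul_zero]
  have h2 : ∑ u ∈ Finset.range k, (F (u + 1) - F u) * (if u < k then (1:ℝ) else 0) = F k - F 0 := by
    rw [← Finset.sum_range_sub]
    refine Finset.sum_congr rfl fun j hj => ?_
    rw [if_pos (Finset.mem_range.1 hj), mul_one]
  rw [h1, h2]; ring

lemma Bf_le2 (m : ℕ) (σ τ : ℕ → ℕ) (hσ : ∀ i j, i ≤ j → j < m → σ i ≤ σ j)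
    (hτ : ∀ i j, i ≤ j → j < m → τ i ≤ τ j) (hσm : ∀ j < m, σ j ≤ m) (hτm : ∀ j < m, τ j ≤ m)
    (F G : ℕ → ℝ) (d : ℝ)
    (h : ∀ i ≤ m, ∀ j ≤ m, |G i - G j| ≤ d) : |Bf m σ τ F G| ≤ d * tvs F m := by
  have e : Bf m σ τ F G = ∑ u ∈ Finset.range m, (F (u + 1) - F u) *
      (∑ j ∈ Finset.range m, (if u < σ j then (1:ℝ) else 0) * (G (j + 1) - G j) -
       ∑ j ∈ Finset.range m, (if u < τ j then (1:ℝ) else 0) * (G (j + 1) - G j)) := by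
    simp_rw [← Finset.sum_sub_distrib, Finset.mul_sum]
    rw [Finset.sum_comm]
    unfold Bf
    refine Finset.sum_congr rfl fun j hj => ?_
    have hj := Finset.mem_range.1 hj
    rw [F_expand F m _ (hσm j hj), F_expand F m _ (hτm j hj), add_sub_add_left_eq_sub,
      ← Finset.sum_sub_distrib, Finset.sum_mul]
    refine Finset.sum_congr rfl fun u _ => ?_
    ring
  rw [e]
  unfold tvs
  rw [Finset.mul_sum]
  refine (Finset.abs_sum_le_sum_abs _ _).trans (Finset.sum_le_sum fun u _ => ?_)
  obtain ⟨A, hA, hA'⟩ := cut_exists m σ hσ u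
  obtain ⟨C, hC, hC'⟩ := cut_exists m τ hτ u
  rw [cut_sum m G A hA σ u hA', cut_sum m G C hC τ u hC', abs_mul, mul_comm]
  refine mul_le_mul_of_nonneg_right ?_ (abs_nonneg _)
  rw [sub_sub_sub_cancel_left]
  exact h _ hC _ hA

lemma approx (x : ℕ → ℝ) {θ : ℝ} (hθ : 0 ≤ θ) (m : ℕ) :
    ∃ y : ℕ → ℝ, (∀ i j, |(x - y) i - (x - y) j| ≤ θ) ∧ ENNReal.ofReal (tvs y m) ≤ dT x θ m ∧
      ∀ w ≤ θ, ∀ c p q, p ≤ q → (∀ i, p ≤ i → i ≤ q → c ≤ x i ∧ x i ≤ c + w) →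
        ∑ i ∈ Finset.Ico p q, |y (i + 1) - y i| ≤ w := by
  obtain ⟨y0, h0, h1⟩ := play_exists x hθ m
  refine ⟨play x θ y0, fun i j => ?_, h1, fun w hw c p q hpq hx => play_local x hθ h0 hw hpq hx⟩
  have h2 := abs_le.1 (play_near x hθ h0 i)
  have h3 := abs_le.1 (play_near x hθ h0 j)
  simp only [Pi.sub_apply]
  rw [abs_le]; constructor <;> linarith

lemma dT_sub_le2 (x y : ℕ → ℝ) {δ δ' : ℝ} (m : ℕ) (hd : δ ≤ δ')
    (h : ENNReal.ofReal (tvs y m) ≤ dT x δ' m) : dT (x - y) δ m ≤ 2 * dT x δ m := by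
  rw [two_mul]
  refine (dT_sub_le x y δ m).trans ?_
  gcongr
  exact h.trans (dT_anti x hd m)

lemma Bf_split (m : ℕ) (σ τ : ℕ → ℕ) (F G F0 G0 : ℕ → ℝ) :
    Bf m σ τ F G = Bf m σ τ F G0 + (Bf m σ τ F0 (G - G0) + Bf m σ τ (F - F0) (G - G0)) := by
  unfold Bf
  rw [← Finset.sum_add_distrib, ← Finset.sum_add_distrib]
  refine Finset.sum_congr rfl fun j _ => ?_
  simp only [Pi.sub_apply]; ring

lemma ofReal_abs_add3 (x y z : ℝ) : ENNReal.ofReal |x + (y + z)| ≤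
    ENNReal.ofReal |x| + ENNReal.ofReal |y| + ENNReal.ofReal |z| := by
  rw [← ENNReal.ofReal_add (abs_nonneg _) (abs_nonneg _),
    ← ENNReal.ofReal_add (by positivity) (abs_nonneg _)]
  apply ENNReal.ofReal_le_ofReal
  have h1 := abs_add_le x (y + z)
  have h2 := abs_add_le y z
  linarith

lemma two_pow_shift (k : ℕ) (e : ℝ) (T : ENNReal) :
    ENNReal.ofReal ((2:ℝ) ^ k * e) * (2 * T) = ENNReal.ofReal ((2:ℝ) ^ (k + 1) * e) * T := by
  rw [← mul_assoc]
  congr 1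
  rw [show (2 : ENNReal) = ENNReal.ofReal 2 by simp, ← ENNReal.ofReal_mul' (by norm_num)]
  congr 1; ring

lemma core (m : ℕ) (σ τ : ℕ → ℕ) (hσ : ∀ i j, i ≤ j → j < m → σ i ≤ σ j)
    (hτ : ∀ i j, i ≤ j → j < m → τ i ≤ τ j) (hσm : ∀ j < m, σ j ≤ m) (hτm : ∀ j < m, τ j ≤ m)
    (r : ℕ) : ∀ (F G : ℕ → ℝ) (E D : ℕ → ℝ), (∀ k, 0 ≤ E k) → (∀ k, 0 ≤ D k) →
    (∀ i j, i ≤ j → E (j + 1) ≤ E (i + 1)) → (∀ i j, i ≤ j → D (j + 1) ≤ D (i + 1)) →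
    (∀ j < m, |F (σ j) - F (τ j)| ≤ E 0) → (∀ i ≤ m, ∀ j ≤ m, |G i - G j| ≤ D 0) →
    ENNReal.ofReal |Bf m σ τ F G| ≤
      ∑ k ∈ Finset.range r, ENNReal.ofReal (2 ^ k * E k) * dT G (D (k + 1)) m +
      ∑ k ∈ Finset.range r, ENNReal.ofReal (2 ^ k * D (k + 1)) * dT F (E (k + 1)) m +
      ENNReal.ofReal (m * E r * D r) := by
  induction r with
  | zero =>
    intro F G E D hE hD hEa hDa hF hG
    simp only [Finset.range_zero, Finset.sum_empty, zero_add]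
    apply ENNReal.ofReal_le_ofReal
    refine (Bf_le1 m σ τ F G (E 0) hF).trans ?_
    have : tvs G m ≤ m * D 0 := by
      unfold tvs
      refine (Finset.sum_le_card_nsmul _ _ (D 0) fun j hj => ?_).trans (by simp)
      have := Finset.mem_range.1 hj
      exact hG _ (by omega) _ (by omega)
    calc E 0 * tvs G m ≤ E 0 * (m * D 0) := mul_le_mul_of_nonneg_left this (hE 0)
      _ = _ := by ring
  | succ r ih =>
    intro F G E D hE hD hEa hDa hF hG
    obtain ⟨F0, hF0, hFT, -⟩ := approx F (hE 1) m
    obtain ⟨G0, hG0, hGT, -⟩ := approx G (hD 1) m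
    rw [Bf_split m σ τ F G F0 G0]
    refine (ofReal_abs_add3 _ _ _).trans ?_
    have h1 : ENNReal.ofReal |Bf m σ τ F G0| ≤ ENNReal.ofReal (E 0) * dT G (D 1) m := by
      refine (ENNReal.ofReal_le_ofReal (Bf_le1 m σ τ F G0 (E 0) hF)).trans ?_
      rw [ENNReal.ofReal_mul (hE 0)]
      gcongr
    have h2 : ENNReal.ofReal |Bf m σ τ F0 (G - G0)| ≤ ENNReal.ofReal (D 1) * dT F (E 1) m := by
      refine (ENNReal.ofReal_le_ofReal (Bf_le2 m σ τ hσ hτ hσm hτm F0 (G - G0) (D 1)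
        fun i _ j _ => hG0 i j)).trans ?_
      rw [ENNReal.ofReal_mul (hD 1)]
      gcongr
    have h3 := ih (F - F0) (G - G0) (fun k => E (k + 1)) (fun k => D (k + 1))
      (fun k => hE _) (fun k => hD _) (fun i j h => hEa _ _ (by omega))
      (fun i j h => hDa _ _ (by omega)) (fun j _ => hF0 _ _) (fun i _ j _ => hG0 i j)
    have h4 : ∑ k ∈ Finset.range r, ENNReal.ofReal (2 ^ k * E (k + 1)) *
          dT (G - G0) (D (k + 1 + 1)) m ≤
        ∑ k ∈ Finset.range r, ENNReal.ofReal (2 ^ (k + 1) * E (k + 1)) *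
          dT G (D (k + 1 + 1)) m := by
      refine Finset.sum_le_sum fun k _ => ?_
      rw [← two_pow_shift]
      gcongr
      exact dT_sub_le2 G G0 m (hDa 0 (k + 1) (by omega)) hGT
    have h5 : ∑ k ∈ Finset.range r, ENNReal.ofReal (2 ^ k * D (k + 1 + 1)) *
          dT (F - F0) (E (k + 1 + 1)) m ≤
        ∑ k ∈ Finset.range r, ENNReal.ofReal (2 ^ (k + 1) * D (k + 1 + 1)) *
          dT F (E (k + 1 + 1)) m := by
      refine Finset.sum_le_sum fun k _ => ?_
      rw [← two_pow_shift]
      gcongr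
      exact dT_sub_le2 F F0 m (hEa 0 (k + 1) (by omega)) hFT
    rw [Finset.sum_range_succ', Finset.sum_range_succ']
    simp only [pow_zero, one_mul, zero_add]
    refine (add_le_add (add_le_add h1 h2) (h3.trans (add_le_add (add_le_add h4 h5) le_rfl))).trans ?_
    apply le_of_eq
    ring

lemma Ach.transfer {f : ℝ → ℝ} {s : ℕ → ℝ} {m : ℕ} {δ a b : ℝ}
    (hs : ∀ i j, i < j → j ≤ m → s i < s j) (hsI : ∀ i ≤ m, s i ∈ Set.Icc a b)
    {j : ℕ} {v : ℝ} (h : Ach (fun i => f (s i)) δ j v) (hj : j ≤ m) :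
    ∃ (n : ℕ) (t : Fin (n + 1) → ℝ), StrictMono t ∧ (∀ i, t i ∈ Set.Icc a b) ∧
      t (Fin.last n) = s j ∧
      ENNReal.ofReal v ≤ ∑ i : Fin n, ENNReal.ofReal (|f (t i.succ) - f (t i.castSucc)| - δ) := by
  induction h with
  | base i =>
    refine ⟨0, fun _ => s i, ?_, fun _ => hsI i hj, rfl, by simp⟩
    intro a b hab; exact absurd hab (by have := a.2; have := b.2; rw [Fin.lt_def]; omega)
  | step i j v h hij ih =>
    obtain ⟨n, t, h1, h2, h3, h4⟩ := ih (by omega)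
    refine ⟨n + 1, Fin.snoc (α := fun _ => ℝ) t (s j), ?_, ?_, by simp, ?_⟩
    · rw [Fin.strictMono_iff_lt_succ]
      intro k
      refine Fin.lastCases ?_ (fun k => ?_) k
      · rw [Fin.succ_last, Fin.snoc_last, Fin.snoc_castSucc, h3]
        exact hs _ _ hij hj
      · rw [Fin.succ_castSucc, Fin.snoc_castSucc, Fin.snoc_castSucc]
        exact h1 (Fin.castSucc_lt_succ)
    · intro k
      refine Fin.lastCases ?_ (fun k => ?_) k
      · rw [Fin.snoc_last]; exact hsI j hj
      · rw [Fin.snoc_castSucc]; exact h2 k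
    · rw [Fin.sum_univ_castSucc]
      simp only [Fin.succ_castSucc, Fin.snoc_castSucc, Fin.succ_last, Fin.snoc_last, h3]
      refine ENNReal.ofReal_add_le.trans (add_le_add h4 ?_)
      simp

lemma dT_le_truncVar {f : ℝ → ℝ} {s : ℕ → ℝ} {m : ℕ} {δ a b : ℝ}
    (hs : ∀ i j, i < j → j ≤ m → s i < s j) (hsI : ∀ i ≤ m, s i ∈ Set.Icc a b) :
    dT (fun i => f (s i)) δ m ≤ truncVar f δ a b := by
  refine iSup_le fun j => iSup_le fun v => iSup_le fun hj => iSup_le fun h => ?_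
  obtain ⟨n, t, h1, h2, -, h4⟩ := h.transfer hs hsI hj
  exact h4.trans (le_iSup_of_le n (le_iSup_of_le t (le_iSup_of_le h1 (le_iSup_of_le h2 le_rfl))))

lemma enum_exists (P : Finset ℝ) (hP : P.Nonempty) :
    ∃ (m : ℕ) (s : ℕ → ℝ) (idx : ℝ → ℕ), (∀ i j, i < j → j ≤ m → s i < s j) ∧
      (∀ i ≤ m, s i ∈ P) ∧ (∀ x ∈ P, idx x ≤ m ∧ s (idx x) = x) := by
  classical
  obtain ⟨m, hm⟩ : ∃ m, P.card = m + 1 := ⟨P.card - 1, by have := hP.card_pos; omega⟩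
  let e := P.orderIsoOfFin hm
  refine ⟨m, fun i => if h : i < m + 1 then (e ⟨i, h⟩ : ℝ) else 0,
    fun x => if h : x ∈ P then (e.symm ⟨x, h⟩ : ℕ) else 0, ?_, ?_, ?_⟩
  · intro i j hij hj
    have h1 : i < m + 1 := by omega
    have h2 : j < m + 1 := by omega
    simp only [h1, h2, dif_pos]
    have : e ⟨i, h1⟩ < e ⟨j, h2⟩ := e.strictMono (by simpa using hij)
    exact this
  · intro i hi
    have h1 : i < m + 1 := by omega
    simp only [h1, dif_pos]
    exact (e ⟨i, h1⟩).2
  · intro x hx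
    simp only [hx, dif_pos]
    refine ⟨by have := (e.symm ⟨x, hx⟩).2; omega, ?_⟩
    rw [dif_pos (e.symm ⟨x, hx⟩).2]
    simp

def IsRS (f g : ℝ → ℝ) (a b δ x : ℝ) : Prop :=
  ∃ (n : ℕ) (t : Fin (n + 1) → ℝ) (ξ : Fin n → ℝ),
    StrictMono t ∧ t 0 = a ∧ t (Fin.last n) = b ∧
    (∀ i : Fin n, t i.castSucc ≤ ξ i ∧ ξ i ≤ t i.succ) ∧
    (∀ i : Fin n, t i.succ - t i.castSucc < δ) ∧
    x = ∑ i : Fin n, f (ξ i) * (g (t i.succ) - g (t i.castSucc))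

lemma rep {f g : ℝ → ℝ} {a b δ : ℝ} (hab : a < b) {n : ℕ} {t : Fin (n + 1) → ℝ} {ξ : Fin n → ℝ}
    (ht : StrictMono t) (hta : t 0 = a) (htb : t (Fin.last n) = b)
    (hξ : ∀ i : Fin n, t i.castSucc ≤ ξ i ∧ ξ i ≤ t i.succ)
    (hδ : ∀ i : Fin n, t i.succ - t i.castSucc < δ)
    {P : Finset ℝ} (htP : ∀ i, t i ∈ P) (hξP : ∀ i, ξ i ∈ P) (hPI : ∀ x ∈ P, x ∈ Set.Icc a b)
    {m : ℕ} {s : ℕ → ℝ} {idx : ℝ → ℕ} (hs : ∀ i j, i < j → j ≤ m → s i < s j)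
    (hsP : ∀ i ≤ m, s i ∈ P) (hidx : ∀ x ∈ P, idx x ≤ m ∧ s (idx x) = x) :
    ∃ σ : ℕ → ℕ, (∀ i j, i ≤ j → j < m → σ i ≤ σ j) ∧ (∀ j < m, σ j ≤ m) ∧
      (∀ j < m, |s (σ j) - s j| < δ ∧ |s (σ j) - s (j + 1)| < δ) ∧
      ∑ i : Fin n, f (ξ i) * (g (t i.succ) - g (t i.castSucc)) =
        ∑ j ∈ Finset.range m, f (s (σ j)) * (g (s (j + 1)) - g (s j)) := by
  classical
  have hsm : ∀ i j, i ≤ j → j ≤ m → s i ≤ s j := fun i j h hj => by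
    rcases h.eq_or_lt with rfl | h
    · exact le_rfl
    · exact (hs i j h hj).le
  have hcell : ∀ j, ∃ i : Fin n, j < m → t i.castSucc ≤ s j ∧ s j < t i.succ := by
    intro j
    by_cases hj : j < m
    · by_contra hcon
      push Not at hcon
      have hall : ∀ i : Fin (n + 1), t i ≤ s j := by
        intro i
        induction i using Fin.induction with
        | zero => rw [hta]; exact (hPI _ (hsP j hj.le)).1
        | succ i ih => exact (hcon i).2 ih
      have h1 := hall (Fin.last n)
      have h2 := hs j m hj le_rfl
      have h3 := (hPI _ (hsP m le_rfl)).2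
      rw [htb] at h1; linarith
    · have hn : n ≠ 0 := by
        rintro rfl
        exact hab.ne (by rw [← hta, ← htb]; rfl)
      exact ⟨⟨0, by omega⟩, fun h => absurd h hj⟩
  choose c hc using hcell
  have hidxm : ∀ x ∈ P, ∀ y ∈ P, x ≤ y → idx x ≤ idx y := by
    intro x hx y hy hxy
    by_contra hcon
    push Not at hcon
    have := hs _ _ hcon (hidx x hx).1
    rw [(hidx x hx).2, (hidx y hy).2] at this; linarith
  have hξm : ∀ i j : Fin n, i ≤ j → ξ i ≤ ξ j := by
    intro i j hij
    rcases hij.eq_or_lt with rfl | h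
    · exact le_rfl
    · refine (hξ i).2.trans (le_trans (ht.monotone ?_) (hξ j).1)
      rw [Fin.le_def]; simpa using h
  have hcm : ∀ i j, i ≤ j → j < m → c i ≤ c j := by
    intro i j hij hj
    by_contra hcon
    push Not at hcon
    have h1 := (hc i (by omega)).1
    have h2 := (hc j hj).2
    have h3 : t (c j).succ ≤ t (c i).castSucc := ht.monotone (by rw [Fin.le_def]; simpa using hcon)
    linarith [hsm i j hij hj.le]
  have hnext : ∀ j < m, s (j + 1) ≤ t (c j).succ := by
    intro j hj
    have h2 := (hc j hj).2
    obtain ⟨h3, h4⟩ := hidx _ (htP (c j).succ)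
    rw [← h4]
    apply hsm _ _ _ h3
    by_contra hcon
    have := hsm (idx (t (c j).succ)) j (by omega) (by omega)
    linarith
  refine ⟨fun j => idx (ξ (c j)), ?_, ?_, ?_, ?_⟩
  · intro i j hij hj
    exact hidxm _ (hξP _) _ (hξP _) (hξm _ _ (hcm i j hij hj))
  · intro j hj
    exact (hidx _ (hξP _)).1
  · intro j hj
    simp only
    rw [(hidx _ (hξP _)).2]
    have h1 := hc j hj
    have h2 := hnext j hj
    have h3 := hξ (c j)
    have h4 := hδ (c j)
    have h5 := hs j (j + 1) (by omega) hj
    constructor <;> rw [abs_lt] <;> constructor <;> linarith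
  · rw [← Finset.sum_fiberwise (Finset.range m) c]
    refine Finset.sum_congr rfl fun i _ => ?_
    have hp := hidx _ (htP i.castSucc)
    have hq := hidx _ (htP i.succ)
    have hlt : t i.castSucc < t i.succ := ht (Fin.castSucc_lt_succ)
    have hset : (Finset.range m).filter (fun j => c j = i) =
        Finset.Ico (idx (t i.castSucc)) (idx (t i.succ)) := by
      ext j
      simp only [Finset.mem_filter, Finset.mem_range, Finset.mem_Ico]
      constructor
      · rintro ⟨hj, rfl⟩
        have h1 := hc j hj
        constructor
        · by_contra hcon
          have := hs j _ (not_le.1 hcon) hp.1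
          rw [hp.2] at this; linarith
        · by_contra hcon
          have := hsm _ j (not_lt.1 hcon) hj.le
          rw [hq.2] at this; linarith
      · rintro ⟨h1, h2⟩
        have hj : j < m := by omega
        refine ⟨hj, ?_⟩
        have h3 := hsm _ j h1 hj.le
        have h4 := hs j _ h2 hq.1
        rw [hp.2] at h3; rw [hq.2] at h4
        have h5 := hc j hj
        apply le_antisymm
        · by_contra hcon
          push Not at hcon
          have : t i.succ ≤ t (c j).castSucc :=
            ht.monotone (by rw [Fin.le_def]; simpa using hcon)
          linarith
        · by_contra hcon
          push Not at hcon
          have : t (c j).succ ≤ t i.castSucc :=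
            ht.monotone (by rw [Fin.le_def]; simpa using hcon)
          linarith
    have hsum : ∑ j ∈ (Finset.range m).filter (fun j => c j = i),
        f (s (idx (ξ (c j)))) * (g (s (j + 1)) - g (s j)) =
        ∑ j ∈ (Finset.range m).filter (fun j => c j = i), f (ξ i) * (g (s (j + 1)) - g (s j)) := by
      refine Finset.sum_congr rfl fun j hj => ?_
      rw [(Finset.mem_filter.1 hj).2, (hidx _ (hξP _)).2]
    rw [hsum, ← Finset.mul_sum, hset,
      Finset.sum_Ico_sub (fun j => g (s j)) (hidxm _ (htP _) _ (htP _) hlt.le), hp.2, hq.2]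

lemma reg_local {f : ℝ → ℝ} {a b : ℝ} (hab : a < b) (hf : Regulated f a b) {ω : ℝ} (hω : 0 < ω)
    {x : ℝ} (hx : x ∈ Set.Icc a b) : ∃ ε > 0, ∃ L R : ℝ,
      (∀ u ∈ Set.Icc a b, |u - x| < ε → u < x → |f u - L| < ω) ∧
      (∀ u ∈ Set.Icc a b, |u - x| < ε → x < u → |f u - R| < ω) := by
  obtain ⟨h1, h2, h3⟩ := hf
  have hR : ∃ ε > 0, ∃ R : ℝ, ∀ u ∈ Set.Icc a b, |u - x| < ε → x < u → |f u - R| < ω := by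
    rcases hx.2.eq_or_lt with rfl | hxb
    · exact ⟨1, one_pos, 0, fun u hu _ h => absurd h (not_lt.2 hu.2)⟩
    · have : ∃ L : ℝ, Tendsto f (nhdsWithin x (Set.Ioi x)) (nhds L) := by
        rcases hx.1.eq_or_lt with rfl | hax
        · exact h1
        · exact (h3 x ⟨hax, hxb⟩).2
      obtain ⟨L, hL⟩ := this
      obtain ⟨ε, hε, h⟩ := Metric.tendsto_nhdsWithin_nhds.1 hL ω hω
      exact ⟨ε, hε, L, fun u _ h4 h5 => h h5 h4⟩
  have hL : ∃ ε > 0, ∃ R : ℝ, ∀ u ∈ Set.Icc a b, |u - x| < ε → u < x → |f u - R| < ω := by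
    rcases hx.1.eq_or_lt with rfl | hxa
    · exact ⟨1, one_pos, 0, fun u hu _ h => absurd h (not_lt.2 hu.1)⟩
    · have : ∃ L : ℝ, Tendsto f (nhdsWithin x (Set.Iio x)) (nhds L) := by
        rcases hx.2.eq_or_lt with rfl | hax
        · exact h2
        · exact (h3 x ⟨hxa, hax⟩).1
      obtain ⟨L, hL⟩ := this
      obtain ⟨ε, hε, h⟩ := Metric.tendsto_nhdsWithin_nhds.1 hL ω hω
      exact ⟨ε, hε, L, fun u _ h4 h5 => h h5 h4⟩
  obtain ⟨ε, hε, R, hR⟩ := hR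
  obtain ⟨ε', hε', L, hL⟩ := hL
  exact ⟨min ε ε', lt_min hε hε', L, R, fun u hu h => hL u hu (h.trans_le (min_le_right _ _)),
    fun u hu h => hR u hu (h.trans_le (min_le_left _ _))⟩

lemma reg_bdd {f : ℝ → ℝ} {a b : ℝ} (hab : a < b) (hf : Regulated f a b) :
    ∃ M, 0 < M ∧ ∀ u ∈ Set.Icc a b, |f u| ≤ M := by
  have key : ∃ M, ∀ u ∈ Set.Icc a b, u ∈ Set.Icc a b → |f u| ≤ M := by
    refine isCompact_Icc.induction_on (p := fun s => ∃ M, ∀ u ∈ s, u ∈ Set.Icc a b → |f u| ≤ M)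
      ⟨0, by simp⟩ ?_ ?_ ?_
    · rintro s t hst ⟨M, hM⟩; exact ⟨M, fun u hu => hM u (hst hu)⟩
    · rintro s t ⟨M, hM⟩ ⟨N, hN⟩
      refine ⟨max M N, fun u hu hI => ?_⟩
      rcases hu with hu | hu
      · exact (hM u hu hI).trans (le_max_left _ _)
      · exact (hN u hu hI).trans (le_max_right _ _)
    · intro x hx
      obtain ⟨ε, hε, L, R, hL, hR⟩ := reg_local hab hf one_pos hx
      refine ⟨Metric.ball x ε, mem_nhdsWithin_of_mem_nhds (Metric.ball_mem_nhds x hε),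
        |L| + |R| + |f x| + 1, fun u hu hI => ?_⟩
      have hu' : |u - x| < ε := hu
      have a1 := abs_nonneg L
      have a2 := abs_nonneg R
      have a3 := abs_nonneg (f x)
      rcases lt_trichotomy u x with h | rfl | h
      · have := hL u hI hu' h
        have := abs_sub_abs_le_abs_sub (f u) L
        linarith
      · linarith
      · have := hR u hI hu' h
        have := abs_sub_abs_le_abs_sub (f u) R
        linarith
  obtain ⟨M, hM⟩ := key
  exact ⟨max M 1, lt_max_of_lt_right one_pos, fun u hu => (hM u hu hu).trans (le_max_left _ _)⟩

lemma regR {f : ℝ → ℝ} {a b : ℝ} (hab : a < b) (hf : Regulated f a b) {ω : ℝ} (hω : 0 < ω) :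
    ∃ Z : Finset ℝ, ∃ δ > 0,
      (∀ z ∈ Z, z ∈ Set.Icc a b ∧ ¬ ContinuousWithinAt f (Set.Icc a b) z) ∧
      ∀ u ∈ Set.Icc a b, ∀ v ∈ Set.Icc a b, |u - v| < δ →
        |f u - f v| ≤ ω ∨ ∃ z ∈ Z, (u ≤ z ∧ z ≤ v) ∨ (v ≤ z ∧ z ≤ u) := by
  classical
  have key := isCompact_Icc.induction_on (s := Set.Icc a b)
    (p := fun s => ∃ Z : Finset ℝ, ∃ δ > 0,
      (∀ z ∈ Z, z ∈ Set.Icc a b ∧ ¬ ContinuousWithinAt f (Set.Icc a b) z) ∧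
      ∀ u ∈ s, u ∈ Set.Icc a b → ∀ v ∈ Set.Icc a b, |u - v| < δ →
        |f u - f v| ≤ ω ∨ ∃ z ∈ Z, (u ≤ z ∧ z ≤ v) ∨ (v ≤ z ∧ z ≤ u))
    ⟨∅, 1, one_pos, by simp, by simp⟩ ?_ ?_ ?_
  · obtain ⟨Z, δ, h1, h2, h3⟩ := key
    exact ⟨Z, δ, h1, h2, fun u hu => h3 u hu hu⟩
  · rintro s t hst ⟨Z, δ, h1, h2, h3⟩
    exact ⟨Z, δ, h1, h2, fun u hu => h3 u (hst hu)⟩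
  · rintro s t ⟨Z, δ, h1, h2, h3⟩ ⟨Z', δ', h1', h2', h3'⟩
    refine ⟨Z ∪ Z', min δ δ', lt_min h1 h1', ?_, ?_⟩
    · intro z hz
      rcases Finset.mem_union.1 hz with h | h
      exacts [h2 z h, h2' z h]
    · intro u hu hI v hv huv
      rcases hu with hu | hu
      · rcases h3 u hu hI v hv (huv.trans_le (min_le_left _ _)) with h | ⟨z, hz, h⟩
        · exact Or.inl h
        · exact Or.inr ⟨z, Finset.mem_union_left _ hz, h⟩
      · rcases h3' u hu hI v hv (huv.trans_le (min_le_right _ _)) with h | ⟨z, hz, h⟩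
        · exact Or.inl h
        · exact Or.inr ⟨z, Finset.mem_union_right _ hz, h⟩
  · intro x hx
    by_cases hc : ContinuousWithinAt f (Set.Icc a b) x
    · obtain ⟨ε, hε, h⟩ := Metric.continuousWithinAt_iff.1 hc (ω / 2) (by positivity)
      refine ⟨Metric.ball x (ε / 2), mem_nhdsWithin_of_mem_nhds (Metric.ball_mem_nhds x (by positivity)),
        ∅, ε / 2, by positivity, by simp, fun u hu hI v hv huv => Or.inl ?_⟩
      have hu' : |u - x| < ε / 2 := hu
      have e1 : |f u - f x| < ω / 2 := h hI (show |u - x| < ε by linarith)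
      have e2 : |f v - f x| < ω / 2 := h hv (show |v - x| < ε by
        have := abs_sub_le v u x
        rw [abs_sub_comm v u] at this; linarith)
      have := abs_sub_le (f u) (f x) (f v)
      rw [abs_sub_comm (f x)] at this; linarith
    · obtain ⟨ε, hε, L, R, hL, hR⟩ := reg_local hab hf (show 0 < ω / 2 by positivity) hx
      refine ⟨Metric.ball x (ε / 2), mem_nhdsWithin_of_mem_nhds (Metric.ball_mem_nhds x (by positivity)),
        {x}, ε / 2, by positivity, by simpa using ⟨hx, hc⟩, fun u hu hI v hv huv => ?_⟩
      have hu' : |u - x| < ε / 2 := hu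
      have hu2 : |u - x| < ε := by linarith
      have hv2 : |v - x| < ε := by
        have := abs_sub_le v u x
        rw [abs_sub_comm v u] at this; linarith
      by_cases hz : (u ≤ x ∧ x ≤ v) ∨ (v ≤ x ∧ x ≤ u)
      · exact Or.inr ⟨x, by simp, hz⟩
      · left
        push Not at hz
        rcases le_or_gt u x with h | h
        · have hvx := hz.1 h
          have hux : u < x := lt_of_not_ge fun h' => by linarith [hz.2 hvx.le]
          have e1 := hL u hI hu2 hux
          have e2 := hL v hv hv2 hvx
          have := abs_sub_le (f u) L (f v)
          rw [abs_sub_comm L] at this; linarith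
        · have hvx : x < v := lt_of_not_ge fun h' => by linarith [hz.2 h']
          have e1 := hR u hI hu2 h
          have e2 := hR v hv hv2 hvx
          have := abs_sub_le (f u) R (f v)
          rw [abs_sub_comm R] at this; linarith

lemma fin_tele (n : ℕ) (u : Fin (n + 1) → ℝ) :
    ∑ i : Fin n, (u i.succ - u i.castSucc) = u (Fin.last n) - u 0 := by
  have h1 := Fin.sum_univ_succ u
  have h2 := Fin.sum_univ_castSucc u
  rw [Finset.sum_sub_distrib]; linarith

lemma truncVar_le_of_control {f H : ℝ → ℝ} {δ a b : ℝ}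
    (hH : ∀ u ∈ Set.Icc a b, ∀ v ∈ Set.Icc a b, u < v → |f v - f u| - δ ≤ H v - H u)
    (hm : ∀ u ∈ Set.Icc a b, ∀ v ∈ Set.Icc a b, u ≤ v → H u ≤ H v) :
    truncVar f δ a b ≤ ENNReal.ofReal (H b - H a) := by
  refine iSup_le fun n => iSup_le fun t => iSup_le fun ht => iSup_le fun hI => ?_
  have hlt : ∀ i : Fin n, t i.castSucc < t i.succ := fun i => ht (Fin.castSucc_lt_succ)
  calc ∑ i : Fin n, ENNReal.ofReal (|f (t i.succ) - f (t i.castSucc)| - δ)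
      ≤ ∑ i : Fin n, ENNReal.ofReal (H (t i.succ) - H (t i.castSucc)) :=
        Finset.sum_le_sum fun i _ => ENNReal.ofReal_le_ofReal (hH _ (hI _) _ (hI _) (hlt i))
    _ = ENNReal.ofReal (∑ i : Fin n, (H (t i.succ) - H (t i.castSucc))) := by
        rw [ENNReal.ofReal_sum_of_nonneg]
        intro i _
        linarith [hm _ (hI i.castSucc) _ (hI i.succ) (hlt i).le]
    _ ≤ _ := by
        apply ENNReal.ofReal_le_ofReal
        rw [fin_tele n (fun i => H (t i))]
        have hi0 := hI 0
        have hil := hI (Fin.last n)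
        have hab : a ≤ b := hi0.1.trans hi0.2
        have h1 := hm _ hil b ⟨hab, le_rfl⟩ hil.2
        have h2 := hm a ⟨le_rfl, hab⟩ _ hi0 hi0.1
        linarith

lemma truncVar_lt_top {f : ℝ → ℝ} {a b : ℝ} (hab : a < b) (hf : Regulated f a b) {δ : ℝ}
    (hδ : 0 < δ) : truncVar f δ a b < ⊤ := by
  classical
  obtain ⟨M, hM0, hM⟩ := reg_bdd hab hf
  obtain ⟨Z, d, hd, -, hZ⟩ := regR hab hf hδ
  let K : ℝ → ℝ := fun t => t / d +
    ∑ z ∈ Z, ((if z < t then (1:ℝ) else 0) + (if z ≤ t then (1:ℝ) else 0))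
  have hterm : ∀ u v : ℝ, u ≤ v → ∀ z : ℝ,
      ((if z < u then (1:ℝ) else 0) + (if z ≤ u then (1:ℝ) else 0)) ≤
      ((if z < v then (1:ℝ) else 0) + (if z ≤ v then (1:ℝ) else 0)) := by
    intro u v huv z
    grind
  have hKm : ∀ u v, u ≤ v → K u ≤ K v := by
    intro u v huv
    apply add_le_add
    · gcongr
    · exact Finset.sum_le_sum fun z _ => hterm u v huv z
  have hK1 : ∀ u v, u < v → d ≤ v - u → 1 ≤ K v - K u := by
    intro u v huv h
    have h1 := Finset.sum_le_sum fun z (_ : z ∈ Z) => hterm u v huv.le z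
    have h2 : 1 ≤ (v - u) / d := by rwa [le_div_iff₀ hd, one_mul]
    rw [sub_div] at h2
    simp only [K]; linarith
  have hK2 : ∀ u v, u < v → (∃ z ∈ Z, u ≤ z ∧ z ≤ v) → 1 ≤ K v - K u := by
    rintro u v huv ⟨z, hz, h1, h2⟩
    have h3 : u / d ≤ v / d := by gcongr
    have h4 : ∑ z ∈ Z, ((if z < u then (1:ℝ) else 0) + (if z ≤ u then (1:ℝ) else 0)) + 1 ≤
        ∑ z ∈ Z, ((if z < v then (1:ℝ) else 0) + (if z ≤ v then (1:ℝ) else 0)) := by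
      rw [← Finset.add_sum_erase _ _ hz, ← Finset.add_sum_erase (a := z) _ _ hz]
      have h5 := Finset.sum_le_sum fun y (_ : y ∈ Z.erase z) => hterm u v huv.le y
      have h6 : ((if z < u then (1:ℝ) else 0) + (if z ≤ u then (1:ℝ) else 0)) + 1 ≤
        ((if z < v then (1:ℝ) else 0) + (if z ≤ v then (1:ℝ) else 0)) := by
        grind
      linarith
    simp only [K]; linarith
  refine lt_of_le_of_lt (truncVar_le_of_control (H := fun t => 2 * M * K t) ?_ ?_)
    ENNReal.ofReal_lt_top
  · intro u hu v hv huv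
    have h0 : |f v - f u| ≤ 2 * M := by
      have := abs_sub (f v) (f u)
      linarith [hM u hu, hM v hv]
    have hmm : 0 ≤ 2 * M * (K v - K u) :=
      mul_nonneg (by positivity) (by linarith [hKm u v huv.le])
    have fin : 1 ≤ K v - K u → |f v - f u| - δ ≤ 2 * M * K v - 2 * M * K u := by
      intro h
      have : 2 * M * 1 ≤ 2 * M * (K v - K u) := by gcongr
      linarith
    rcases lt_or_ge (v - u) d with h | h
    · rcases hZ u hu v hv (by rw [abs_sub_comm, abs_of_pos (by linarith)]; exact h) with h | ⟨z, hz, h | h⟩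
      · rw [abs_sub_comm] at h; linarith
      · exact fin (hK2 u v huv ⟨z, hz, h⟩)
      · linarith
    · exact fin (hK1 u v huv h)
  · intro u hu v hv huv
    have := hKm u v huv
    gcongr

lemma s_ends {a b : ℝ} {P : Finset ℝ} (haP : a ∈ P) (hbP : b ∈ P)
    (hPI : ∀ x ∈ P, x ∈ Set.Icc a b)
    {m : ℕ} {s : ℕ → ℝ} {idx : ℝ → ℕ} (hs : ∀ i j, i < j → j ≤ m → s i < s j)
    (hsP : ∀ i ≤ m, s i ∈ P) (hidx : ∀ x ∈ P, idx x ≤ m ∧ s (idx x) = x) :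
    s 0 = a ∧ s m = b := by
  constructor
  · obtain ⟨h1, h2⟩ := hidx a haP
    rcases Nat.eq_zero_or_pos (idx a) with h | h
    · rw [← h]; exact h2
    · have := hs 0 _ h h1
      rw [h2] at this
      linarith [(hPI _ (hsP 0 (by omega))).1]
  · obtain ⟨h1, h2⟩ := hidx b hbP
    rcases h1.eq_or_lt with h | h
    · rw [← h]; exact h2
    · have := hs _ m h le_rfl
      rw [h2] at this
      linarith [(hPI _ (hsP m le_rfl)).2]

lemma pts_mem {a b : ℝ} {n : ℕ} {t : Fin (n + 1) → ℝ} {ξ : Fin n → ℝ}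
    (ht : StrictMono t) (hta : t 0 = a) (htb : t (Fin.last n) = b)
    (hξ : ∀ i : Fin n, t i.castSucc ≤ ξ i ∧ ξ i ≤ t i.succ) :
    (∀ i, t i ∈ Set.Icc a b) ∧ (∀ i, ξ i ∈ Set.Icc a b) := by
  have h : ∀ i, t i ∈ Set.Icc a b := fun i =>
    ⟨hta ▸ ht.monotone (Fin.zero_le i), htb ▸ ht.monotone (Fin.le_last i)⟩
  exact ⟨h, fun i => ⟨(h _).1.trans (hξ i).1, (hξ i).2.trans (h _).2⟩⟩

lemma two_rep {f g : ℝ → ℝ} {a b δ x x' : ℝ} (hab : a < b) (hx : IsRS f g a b δ x)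
    (hx' : IsRS f g a b δ x') : ∃ (m : ℕ) (s : ℕ → ℝ) (σ τ : ℕ → ℕ),
      (∀ i j, i < j → j ≤ m → s i < s j) ∧ (∀ i ≤ m, s i ∈ Set.Icc a b) ∧ s 0 = a ∧ s m = b ∧
      (∀ i j, i ≤ j → j < m → σ i ≤ σ j) ∧ (∀ i j, i ≤ j → j < m → τ i ≤ τ j) ∧
      (∀ j < m, σ j ≤ m) ∧ (∀ j < m, τ j ≤ m) ∧
      (∀ j < m, |s (σ j) - s j| < δ ∧ |s (σ j) - s (j + 1)| < δ) ∧
      (∀ j < m, |s (τ j) - s j| < δ ∧ |s (τ j) - s (j + 1)| < δ) ∧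
      x = ∑ j ∈ Finset.range m, f (s (σ j)) * (g (s (j + 1)) - g (s j)) ∧
      x' = ∑ j ∈ Finset.range m, f (s (τ j)) * (g (s (j + 1)) - g (s j)) := by
  classical
  obtain ⟨n, t, ξ, h1, h2, h3, h4, h5, rfl⟩ := hx
  obtain ⟨n', t', ξ', h1', h2', h3', h4', h5', rfl⟩ := hx'
  obtain ⟨q1, q2⟩ := pts_mem h1 h2 h3 h4
  obtain ⟨q1', q2'⟩ := pts_mem h1' h2' h3' h4'
  let P : Finset ℝ := (Finset.univ.image t ∪ Finset.univ.image ξ) ∪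
    (Finset.univ.image t' ∪ Finset.univ.image ξ')
  have m1 : ∀ i, t i ∈ P := fun i => by simp [P]
  have m2 : ∀ i, ξ i ∈ P := fun i => by simp [P]
  have m1' : ∀ i, t' i ∈ P := fun i => by simp [P]
  have m2' : ∀ i, ξ' i ∈ P := fun i => by simp [P]
  have hPI : ∀ x ∈ P, x ∈ Set.Icc a b := by
    intro x hx
    simp only [P, Finset.mem_union, Finset.mem_image, Finset.mem_univ, true_and] at hx
    rcases hx with (⟨i, rfl⟩ | ⟨i, rfl⟩) | (⟨i, rfl⟩ | ⟨i, rfl⟩)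
    exacts [q1 i, q2 i, q1' i, q2' i]
  obtain ⟨m, s, idx, hs, hsP, hidx⟩ := enum_exists P ⟨_, m1 0⟩
  obtain ⟨e0, em⟩ := s_ends (h2 ▸ m1 0) (h3 ▸ m1 _) hPI hs hsP hidx
  obtain ⟨σ, a1, a2, a3, a4⟩ := rep (f := f) (g := g) hab h1 h2 h3 h4 h5 m1 m2 hPI hs hsP hidx
  obtain ⟨τ, b1, b2, b3, b4⟩ := rep (f := f) (g := g) hab h1' h2' h3' h4' h5' m1' m2' hPI hs hsP hidx
  exact ⟨m, s, σ, τ, hs, fun i hi => hPI _ (hsP i hi), e0, em, a1, b1, a2, b2, a3, b3, a4, b4⟩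

lemma main_bound {f g : ℝ → ℝ} {a b : ℝ} (hab : a < b)
    (hf : Regulated f a b) (hg : Regulated g a b)
    (η θ : ℕ → ℝ) (hηnn : ∀ k, 0 ≤ η k) (hθnn : ∀ k, 0 ≤ θ k)
    (hηa : Antitone η) (hθa : Antitone θ)
    (hηlim : Tendsto η atTop (nhds 0)) (hθlim : Tendsto θ atTop (nhds 0))
    (e : ℝ) (he : ∀ u ∈ Set.Icc a b, |f u - f a| ≤ e) {δ x : ℝ} (hx : IsRS f g a b δ x) :
    ENNReal.ofReal |x - f a * (g b - g a)| ≤ (∑' k : ℕ,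
          ENNReal.ofReal ((2 : ℝ) ^ k * (if k = 0 then e else η (k - 1))) *
            truncVar g (θ k) a b)
        + ∑' k : ℕ, ENNReal.ofReal ((2 : ℝ) ^ k * θ k) * truncVar f (η k) a b := by
  obtain ⟨m, s, σ, -, hs, hsI, e0, em, h1, -, h2, -, -, -, rfl, -⟩ := two_rep hab hx hx
  obtain ⟨M, hM0, hM⟩ := reg_bdd hab hg
  have he0 : 0 ≤ e := (abs_nonneg _).trans (he a ⟨le_rfl, hab.le⟩)
  set E : ℕ → ℝ := fun k => if k = 0 then e else η (k - 1) with hE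
  set D : ℕ → ℝ := fun k => if k = 0 then 2 * M else θ (k - 1) with hD
  have hB : ∑ j ∈ Finset.range m, f (s (σ j)) * (g (s (j + 1)) - g (s j)) - f a * (g b - g a) =
      Bf m σ (fun _ => 0) (fun i => f (s i)) (fun i => g (s i)) := by
    unfold Bf
    simp_rw [sub_mul]
    rw [Finset.sum_sub_distrib, ← Finset.mul_sum, Finset.sum_range_sub (fun i => g (s i)), e0, em]
  rw [hB]
  have key : ∀ R : ℕ, ENNReal.ofReal |Bf m σ (fun _ => 0) (fun i => f (s i)) (fun i => g (s i))| ≤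
      ((∑' k : ℕ, ENNReal.ofReal ((2 : ℝ) ^ k * E k) * truncVar g (θ k) a b)
        + ∑' k : ℕ, ENNReal.ofReal ((2 : ℝ) ^ k * θ k) * truncVar f (η k) a b) +
        ENNReal.ofReal (m * E R * D R) := by
    intro R
    refine (core m σ (fun _ => 0) h1 (fun _ _ _ _ => le_rfl) h2 (fun _ _ => Nat.zero_le _) R
      (fun i => f (s i)) (fun i => g (s i)) E D ?_ ?_ ?_ ?_ ?_ ?_).trans ?_
    · intro k; simp only [hE]; split_ifs; exacts [he0, hηnn _]
    · intro k; simp only [hD]; split_ifs; exacts [by positivity, hθnn _]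
    · intro i j hij; simpa [hE] using hηa hij
    · intro i j hij; simpa [hD] using hθa hij
    · intro j hj
      have := he _ (hsI _ (h2 j hj))
      simpa [hE, e0] using this
    · intro i hi j hj
      have := abs_sub (g (s i)) (g (s j))
      have := hM _ (hsI i hi)
      have := hM _ (hsI j hj)
      simp only [hD, if_true]; linarith
    · have ED : ∀ k, D (k + 1) = θ k := fun k => by simp [hD]
      have EE : ∀ k, E (k + 1) = η k := fun k => by simp [hE]
      simp_rw [ED, EE]
      gcongr
      · refine (Finset.sum_le_sum fun k _ => ?_).trans (ENNReal.sum_le_tsum (Finset.range R))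
        gcongr
        exact dT_le_truncVar hs hsI
      · refine (Finset.sum_le_sum fun k _ => ?_).trans (ENNReal.sum_le_tsum (Finset.range R))
        gcongr
        exact dT_le_truncVar hs hsI
  have hlim : Tendsto (fun R : ℕ => ENNReal.ofReal (m * E R * D R)) atTop (nhds 0) := by
    rw [← tendsto_add_atTop_iff_nat 1]
    have : Tendsto (fun R : ℕ => (m : ℝ) * η R * θ R) atTop (nhds (m * 0 * 0)) :=
      (hηlim.const_mul _).mul hθlim
    have := ENNReal.tendsto_ofReal this
    simpa [hE, hD] using this
  have := ge_of_tendsto' ((tendsto_const_nhds).add hlim) key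
  rw [add_zero] at this
  exact this

lemma truncVar_anti {f : ℝ → ℝ} {a b δ δ' : ℝ} (h : δ' ≤ δ) :
    truncVar f δ a b ≤ truncVar f δ' a b := by
  unfold truncVar
  gcongr

lemma exists_unif (g : ℝ → ℝ) (a b w : ℝ) (hw : 0 < w) (Z : Finset ℝ)
    (hZ : ∀ z ∈ Z, ContinuousWithinAt g (Set.Icc a b) z) :
    ∃ d > 0, ∀ z ∈ Z, ∀ u ∈ Set.Icc a b, |u - z| < d → |g u - g z| ≤ w := by
  classical
  induction Z using Finset.induction_on with
  | empty => exact ⟨1, one_pos, by simp⟩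
  | insert z Z _ ih =>
    obtain ⟨d, hd, h⟩ := ih fun y hy => hZ y (Finset.mem_insert_of_mem hy)
    obtain ⟨d', hd', h'⟩ := Metric.continuousWithinAt_iff.1 (hZ z (Finset.mem_insert_self _ _)) w hw
    refine ⟨min d d', lt_min hd hd', fun y hy u hu huy => ?_⟩
    rcases Finset.mem_insert.1 hy with rfl | hy
    · exact (h' hu (huy.trans_le (min_le_right _ _))).le
    · exact h y hy u hu (huy.trans_le (min_le_left _ _))

lemma window {m : ℕ} {s G0 G : ℕ → ℝ} {w θ z d c : ℝ} (hw0 : 0 ≤ w) (hw : w ≤ θ)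
    (hs : ∀ i j, i < j → j ≤ m → s i < s j)
    (hloc : ∀ w ≤ θ, ∀ c p q, p ≤ q → (∀ i, p ≤ i → i ≤ q → c ≤ G i ∧ G i ≤ c + w) →
        ∑ i ∈ Finset.Ico p q, |G0 (i + 1) - G0 i| ≤ w)
    (hG : ∀ i ≤ m, |s i - z| < d → c ≤ G i ∧ G i ≤ c + w) :
    ∑ j ∈ Finset.range m with (|s j - z| < d ∧ |s (j + 1) - z| < d), |G0 (j + 1) - G0 j| ≤ w := by
  classical
  set W := (Finset.range m).filter (fun j => |s j - z| < d ∧ |s (j + 1) - z| < d) with hW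
  have hsm : ∀ i j, i ≤ j → j ≤ m → s i ≤ s j := fun i j h hj => by
    rcases h.eq_or_lt with rfl | h
    · exact le_rfl
    · exact (hs i j h hj).le
  rcases W.eq_empty_or_nonempty with h | h
  · rw [h]; simpa using hw0
  · obtain ⟨p1, p2⟩ := Finset.mem_filter.1 (W.min'_mem h)
    obtain ⟨q1, q2⟩ := Finset.mem_filter.1 (W.max'_mem h)
    have hpq : W.min' h ≤ W.max' h := W.min'_le _ (W.max'_mem h)
    generalize hp : W.min' h = p at *
    generalize hq : W.max' h = q at *
    have q1 := Finset.mem_range.1 q1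
    have hsub : W ⊆ Finset.Ico p (q + 1) := by
      intro j hj
      have e1 := W.min'_le j hj
      have e2 := W.le_max' j hj
      rw [Finset.mem_Ico]; omega
    refine (Finset.sum_le_sum_of_subset_of_nonneg hsub fun _ _ _ => abs_nonneg _).trans ?_
    refine hloc w hw c p (q + 1) (by omega) fun i hi1 hi2 => hG i (by omega) ?_
    have e1 := hsm p i hi1 (by omega)
    have e2 := hsm i (q + 1) hi2 (by omega)
    have e3 := abs_lt.1 p2.1
    have e4 := abs_lt.1 q2.2
    rw [abs_lt]; constructor <;> linarith

lemma special {f g : ℝ → ℝ} {a b M ω d δ w θ : ℝ} {Z : Finset ℝ} {m : ℕ} {s : ℕ → ℝ}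
    {σ τ : ℕ → ℕ} {G0 : ℕ → ℝ} (hM0 : 0 < M) (hM : ∀ u ∈ Set.Icc a b, |f u| ≤ M)
    (hω : 0 ≤ ω)
    (hZ : ∀ u ∈ Set.Icc a b, ∀ v ∈ Set.Icc a b, |u - v| < d →
        |f u - f v| ≤ ω ∨ ∃ z ∈ Z, (u ≤ z ∧ z ≤ v) ∨ (v ≤ z ∧ z ≤ u))
    (hw0 : 0 ≤ w) (hw : w ≤ θ)
    (hg : ∀ z ∈ Z, ∀ u ∈ Set.Icc a b, |u - z| < δ → |g u - g z| ≤ w / 2) (hδd : 2 * δ ≤ d)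
    (hs : ∀ i j, i < j → j ≤ m → s i < s j) (hsI : ∀ i ≤ m, s i ∈ Set.Icc a b)
    (hσm : ∀ j < m, σ j ≤ m) (hτm : ∀ j < m, τ j ≤ m)
    (hσ : ∀ j < m, |s (σ j) - s j| < δ ∧ |s (σ j) - s (j + 1)| < δ)
    (hτ : ∀ j < m, |s (τ j) - s j| < δ ∧ |s (τ j) - s (j + 1)| < δ)
    (hloc : ∀ w ≤ θ, ∀ c p q, p ≤ q → (∀ i, p ≤ i → i ≤ q → c ≤ g (s i) ∧ g (s i) ≤ c + w) →
        ∑ i ∈ Finset.Ico p q, |G0 (i + 1) - G0 i| ≤ w) :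
    |Bf m σ τ (fun i => f (s i)) G0| ≤ ω * tvs G0 m + Z.card * (2 * M * w) := by
  classical
  have step1 : |Bf m σ τ (fun i => f (s i)) G0| ≤ ∑ j ∈ Finset.range m,
      (ω + ∑ z ∈ Z, if (|s j - z| < δ ∧ |s (j + 1) - z| < δ) then 2 * M else 0) *
        |G0 (j + 1) - G0 j| := by
    unfold Bf
    refine (Finset.abs_sum_le_sum_abs _ _).trans (Finset.sum_le_sum fun j hj => ?_)
    have hj := Finset.mem_range.1 hj
    rw [abs_mul]
    refine mul_le_mul_of_nonneg_right ?_ (abs_nonneg _)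
    have hnn : ∀ z ∈ Z, (0:ℝ) ≤ if (|s j - z| < δ ∧ |s (j + 1) - z| < δ) then 2 * M else 0 := by
      intro z _; split_ifs <;> positivity
    have hu := hsI _ (hσm j hj)
    have hv := hsI _ (hτm j hj)
    obtain ⟨a1, a2⟩ := hσ j hj
    obtain ⟨b1, b2⟩ := hτ j hj
    rw [abs_lt] at a1 a2 b1 b2
    rcases hZ _ hu _ hv (by rw [abs_lt]; constructor <;> linarith) with h | ⟨z, hz, h⟩
    · have := Finset.sum_nonneg hnn
      simp only; linarith
    · have h1 : |s j - z| < δ ∧ |s (j + 1) - z| < δ := by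
        rcases h with h | h <;> constructor <;> rw [abs_lt] <;> constructor <;> linarith
      have h2 := Finset.single_le_sum hnn hz
      rw [if_pos h1] at h2
      have := abs_sub (f (s (σ j))) (f (s (τ j)))
      have := hM _ hu
      have := hM _ hv
      simp only; linarith
  refine step1.trans ?_
  have step2 : ∑ j ∈ Finset.range m,
      (ω + ∑ z ∈ Z, if (|s j - z| < δ ∧ |s (j + 1) - z| < δ) then 2 * M else 0) *
        |G0 (j + 1) - G0 j| = ω * tvs G0 m + ∑ z ∈ Z, 2 * M *
        ∑ j ∈ Finset.range m with (|s j - z| < δ ∧ |s (j + 1) - z| < δ),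
          |G0 (j + 1) - G0 j| := by
    simp_rw [add_mul, Finset.sum_add_distrib]
    congr 1
    · unfold tvs; rw [Finset.mul_sum]
    · simp_rw [Finset.sum_mul]
      rw [Finset.sum_comm]
      refine Finset.sum_congr rfl fun z _ => ?_
      rw [Finset.sum_filter, Finset.mul_sum]
      refine Finset.sum_congr rfl fun j _ => ?_
      split_ifs <;> simp
  rw [step2]
  gcongr
  rw [← nsmul_eq_mul]
  refine Finset.sum_le_card_nsmul _ _ _ fun z hz => ?_
  refine mul_le_mul_of_nonneg_left ?_ (by positivity)
  refine window (c := g z - w / 2) (G := fun i => g (s i)) hw0 hw hs hloc fun i hi hiz => ?_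
  have := abs_le.1 (hg z hz _ (hsI i hi) hiz)
  constructor <;> linarith

lemma tail_bound {f g : ℝ → ℝ} {a b : ℝ} {η θ : ℕ → ℝ} (hη0 : ∀ k, 0 ≤ η k) (hθ0 : ∀ k, 0 ≤ θ k)
    (hηa : Antitone η) (hθa : Antitone θ)
    (hηlim : Tendsto η atTop (nhds 0)) (hθlim : Tendsto θ atTop (nhds 0))
    {m : ℕ} {s : ℕ → ℝ} {σ τ : ℕ → ℕ}
    (hs : ∀ i j, i < j → j ≤ m → s i < s j) (hsI : ∀ i ≤ m, s i ∈ Set.Icc a b)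
    (hσ : ∀ i j, i ≤ j → j < m → σ i ≤ σ j) (hτ : ∀ i j, i ≤ j → j < m → τ i ≤ τ j)
    (hσm : ∀ j < m, σ j ≤ m) (hτm : ∀ j < m, τ j ≤ m) (r : ℕ) {F0 G0 : ℕ → ℝ}
    (hF0 : ∀ i j, |((fun i => f (s i)) - F0) i - ((fun i => f (s i)) - F0) j| ≤ η r)
    (hG0 : ∀ i j, |((fun i => g (s i)) - G0) i - ((fun i => g (s i)) - G0) j| ≤ θ r)
    (hFT : ENNReal.ofReal (tvs F0 m) ≤ dT (fun i => f (s i)) (η r) m)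
    (hGT : ENNReal.ofReal (tvs G0 m) ≤ dT (fun i => g (s i)) (θ r) m) :
    ENNReal.ofReal |Bf m σ τ ((fun i => f (s i)) - F0) ((fun i => g (s i)) - G0)| ≤
      ∑' k, ENNReal.ofReal (2 ^ (k + r + 1) * η (k + r)) * truncVar g (θ (k + r + 1)) a b +
      ∑' k, ENNReal.ofReal (2 ^ (k + r + 1) * θ (k + r + 1)) * truncVar f (η (k + r + 1)) a b := by
  have key : ∀ R : ℕ,
      ENNReal.ofReal |Bf m σ τ ((fun i => f (s i)) - F0) ((fun i => g (s i)) - G0)| ≤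
      (∑' k, ENNReal.ofReal (2 ^ (k + r + 1) * η (k + r)) * truncVar g (θ (k + r + 1)) a b +
      ∑' k, ENNReal.ofReal (2 ^ (k + r + 1) * θ (k + r + 1)) * truncVar f (η (k + r + 1)) a b) +
      ENNReal.ofReal (m * η (R + r) * θ (R + r)) := by
    intro R
    refine (core m σ τ hσ hτ hσm hτm R _ _ (fun k => η (k + r)) (fun k => θ (k + r))
      (fun k => hη0 _) (fun k => hθ0 _) (fun i j h => hηa (by omega)) (fun i j h => hθa (by omega))
      (fun j _ => by simpa using hF0 (σ j) (τ j)) (fun i _ j _ => by simpa using hG0 i j)).trans ?_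
    have hpow : ∀ k : ℕ, (2:ℝ) ^ (k + 1) ≤ 2 ^ (k + r + 1) := fun k =>
      pow_le_pow_right₀ (by norm_num) (by omega)
    have hr : ∀ k, k + 1 + r = k + r + 1 := fun k => by omega
    simp_rw [hr]
    gcongr
    · refine (Finset.sum_le_sum fun k _ => ?_).trans (ENNReal.sum_le_tsum (Finset.range R))
      calc _ ≤ ENNReal.ofReal (2 ^ k * η (k + r)) * (2 * truncVar g (θ (k + r + 1)) a b) := by
            gcongr
            refine (dT_sub_le2 _ G0 m (hθa (by omega)) hGT).trans ?_
            gcongr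
            exact dT_le_truncVar hs hsI
        _ ≤ _ := by
            rw [two_pow_shift]
            gcongr
            · exact hη0 _
            · norm_num
            · omega
    · refine (Finset.sum_le_sum fun k _ => ?_).trans (ENNReal.sum_le_tsum (Finset.range R))
      calc _ ≤ ENNReal.ofReal (2 ^ k * θ (k + r + 1)) * (2 * truncVar f (η (k + r + 1)) a b) := by
            gcongr
            refine (dT_sub_le2 _ F0 m (hηa (by omega)) hFT).trans ?_
            gcongr
            exact dT_le_truncVar hs hsI
        _ ≤ _ := by
            rw [two_pow_shift]
            gcongr
            · exact hθ0 _
            · norm_num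
            · omega
  have hlim : Tendsto (fun R : ℕ => ENNReal.ofReal (m * η (R + r) * θ (R + r))) atTop (nhds 0) := by
    have h := ((((tendsto_add_atTop_iff_nat r).2 hηlim).const_mul (m : ℝ)).mul
      ((tendsto_add_atTop_iff_nat r).2 hθlim))
    have := ENNReal.tendsto_ofReal h
    simpa using this
  have := ge_of_tendsto' ((tendsto_const_nhds).add hlim) key
  rw [add_zero] at this
  exact this

lemma cauchy_RS {f g : ℝ → ℝ} {a b : ℝ} (hab : a < b)
    (hf : Regulated f a b) (hg : Regulated g a b) (hfg : NoCommonDiscont f g a b)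
    {η θ : ℕ → ℝ} (hη0 : ∀ k, 0 < η k) (hθ0 : ∀ k, 0 < θ k)
    (hηa : Antitone η) (hθa : Antitone θ)
    (hηlim : Tendsto η atTop (nhds 0)) (hθlim : Tendsto θ atTop (nhds 0))
    (h1 : ∑' k, ENNReal.ofReal (2 ^ (k + 1) * η k) * truncVar g (θ (k + 1)) a b ≠ ⊤)
    (h2 : ∑' k, ENNReal.ofReal (2 ^ k * θ k) * truncVar f (η k) a b ≠ ⊤)
    {ε : ℝ} (hε : 0 < ε) :
    ∃ δ > 0, ∀ x x', IsRS f g a b δ x → IsRS f g a b δ x' → |x - x'| ≤ ε := by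
  have t1 := ENNReal.tendsto_sum_nat_add _ h1
  have t2 := ENNReal.tendsto_sum_nat_add _ h2
  have hε6 : 0 < ENNReal.ofReal (ε / 6) := ENNReal.ofReal_pos.2 (by positivity)
  obtain ⟨r, hr1, hr2⟩ := ((t1.eventually_lt_const hε6).and (t2.eventually_lt_const hε6)).exists
  obtain ⟨M, hM0, hM⟩ := reg_bdd hab hf
  have hCfin := (truncVar_lt_top hab hg (hθ0 r)).ne
  set C := (truncVar g (θ r) a b).toReal with hC
  have hC0 : 0 ≤ C := ENNReal.toReal_nonneg
  set ω := ε / (4 * (C + 1)) with hω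
  have hω0 : 0 < ω := by positivity
  obtain ⟨Z, d, hd, hZ1, hZ2⟩ := regR hab hf hω0
  set w := min (θ r) (ε / (8 * M * (Z.card + 1))) with hw
  have hw0 : 0 < w := lt_min (hθ0 r) (by positivity)
  obtain ⟨d', hd', hg'⟩ := exists_unif g a b (w / 2) (by positivity) Z fun z hz =>
    (hfg z (hZ1 z hz).1).resolve_left (hZ1 z hz).2
  refine ⟨min (d / 2) d', lt_min (by positivity) hd', fun x x' hx hx' => ?_⟩
  set δ := min (d / 2) d' with hδ
  obtain ⟨m, s, σ, τ, hs, hsI, e0, em, hσ, hτ, hσm, hτm, hσd, hτd, rfl, rfl⟩ := two_rep hab hx hx'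
  obtain ⟨F0, hF0, hFT, -⟩ := approx (fun i => f (s i)) (hη0 r).le m
  obtain ⟨G0, hG0, hGT, hloc⟩ := approx (fun i => g (s i)) (hθ0 r).le m
  have hB : ∑ j ∈ Finset.range m, f (s (σ j)) * (g (s (j + 1)) - g (s j)) -
      ∑ j ∈ Finset.range m, f (s (τ j)) * (g (s (j + 1)) - g (s j)) =
      Bf m σ τ (fun i => f (s i)) (fun i => g (s i)) := by
    unfold Bf
    rw [← Finset.sum_sub_distrib]
    refine Finset.sum_congr rfl fun j _ => ?_
    ring
  rw [hB, Bf_split m σ τ _ _ F0 G0, ← ENNReal.ofReal_le_ofReal_iff hε.le]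
  refine (ofReal_abs_add3 _ _ _).trans ?_
  have b1 : |Bf m σ τ (fun i => f (s i)) G0| ≤ ε / 2 := by
    have hsp := special (σ := σ) (τ := τ) (δ := δ) hM0 hM hω0.le hZ2 hw0.le (min_le_left _ _)
      (fun z hz u hu h => hg' z hz u hu (h.trans_le (min_le_right _ _)))
      (by linarith [min_le_left (d / 2) d']) hs hsI hσm hτm hσd hτd hloc
    have htv : tvs G0 m ≤ C :=
      (ENNReal.ofReal_le_iff_le_toReal hCfin).1 (hGT.trans (dT_le_truncVar hs hsI))
    have q1 : ω * tvs G0 m ≤ ε / 4 := by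
      calc ω * tvs G0 m ≤ ω * (C + 1) := by gcongr; linarith
        _ = ε / 4 := by rw [hω]; field_simp
    have q2 : Z.card * (2 * M * w) ≤ ε / 4 := by
      calc Z.card * (2 * M * w) ≤ (Z.card + 1) * (2 * M * (ε / (8 * M * (Z.card + 1)))) := by
            gcongr
            · linarith
            · exact min_le_right _ _
        _ = ε / 4 := by field_simp; norm_num
    linarith
  have b2 : ENNReal.ofReal |Bf m σ τ F0 ((fun i => g (s i)) - G0)| ≤ ENNReal.ofReal (ε / 6) := by
    refine (ENNReal.ofReal_le_ofReal (Bf_le2 m σ τ hσ hτ hσm hτm F0 _ (θ r)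
        fun i _ j _ => hG0 i j)).trans (le_trans ?_ hr2.le)
    rw [ENNReal.ofReal_mul (hθ0 r).le]
    refine le_trans ?_ (ENNReal.le_tsum 0)
    rw [zero_add]
    gcongr
    · exact le_mul_of_one_le_left (hθ0 r).le (one_le_pow₀ (by norm_num))
    · exact hFT.trans (dT_le_truncVar hs hsI)
  have b3 := tail_bound (f := f) (g := g) (fun k => (hη0 k).le) (fun k => (hθ0 k).le) hηa hθa hηlim
    hθlim hs hsI hσ hτ hσm hτm r hF0 hG0 hFT hGT
  have b4 : ∑' k, ENNReal.ofReal (2 ^ (k + r + 1) * θ (k + r + 1)) *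
      truncVar f (η (k + r + 1)) a b ≤ ENNReal.ofReal (ε / 6) := by
    refine le_trans ?_ hr2.le
    have hinj : Function.Injective (fun k : ℕ => k + 1) := fun i j h => by simpa using h
    have := ENNReal.tsum_comp_le_tsum_of_injective hinj
      (fun k => ENNReal.ofReal (2 ^ (k + r) * θ (k + r)) * truncVar f (η (k + r)) a b)
    refine le_trans (le_of_eq ?_) this
    refine tsum_congr fun k => ?_
    rw [show k + 1 + r = k + r + 1 by omega]
  calc _ ≤ ENNReal.ofReal (ε / 2) + ENNReal.ofReal (ε / 6) +
        (ENNReal.ofReal (ε / 6) + ENNReal.ofReal (ε / 6)) :=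
        add_le_add (add_le_add (ENNReal.ofReal_le_ofReal b1) b2)
          (b3.trans (add_le_add hr1.le b4))
    _ = ENNReal.ofReal ε := by
        rw [← ENNReal.ofReal_add (by positivity) (by positivity),
          ← ENNReal.ofReal_add (by positivity) (by positivity),
          ← ENNReal.ofReal_add (by positivity) (by positivity)]
        congr 1; ring

lemma four_sum : ∑' k : ℕ, ENNReal.ofReal (2 ^ (k + 1) * (1 / 4 : ℝ) ^ k) ≠ ⊤ := by
  have h : (fun k : ℕ => (2:ℝ) ^ (k + 1) * (1 / 4 : ℝ) ^ k) = fun k => 2 * (1 / 2 : ℝ) ^ k := by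
    funext k
    rw [pow_succ, show (1 / 4 : ℝ) = (1 / 2) * (1 / 2) by norm_num, mul_pow]
    have : (2:ℝ) ^ k * (1 / 2) ^ k = 1 := by rw [← mul_pow]; norm_num
    linear_combination 2 * (1 / 2 : ℝ) ^ k * this
  have hs : Summable (fun k : ℕ => (2:ℝ) ^ (k + 1) * (1 / 4 : ℝ) ^ k) := by
    rw [h]
    exact (summable_geometric_of_lt_one (by norm_num) (by norm_num)).mul_left 2
  exact hs.tsum_ofReal_ne_top

lemma four_anti : Antitone (fun k : ℕ => (1 / 4 : ℝ) ^ k) :=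
  fun _ _ h => pow_le_pow_of_le_one (by norm_num) (by norm_num) h

lemma four_lim : Tendsto (fun k : ℕ => (1 / 4 : ℝ) ^ k) atTop (nhds 0) :=
  tendsto_pow_atTop_nhds_zero_of_lt_one (by norm_num) (by norm_num)

lemma geo_seq (A : ℕ → ENNReal) (hA : Monotone A) (hfin : ∀ k, A k < ⊤) :
    ∃ α : ℕ → ℝ, (∀ k, 0 < α k) ∧ Antitone α ∧ Tendsto α atTop (nhds 0) ∧
      ∑' k, ENNReal.ofReal (2 ^ (k + 1) * α k) * A k ≠ ⊤ := by
  have hden : ∀ k, 0 < 1 + (A k).toReal := fun k => by positivity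
  refine ⟨fun k => (1 / 4 : ℝ) ^ k / (1 + (A k).toReal), fun k => by have := hden k; positivity,
    ?_, ?_, ?_⟩
  · intro i j hij
    have h1 : (A i).toReal ≤ (A j).toReal := ENNReal.toReal_mono (hfin j).ne (hA hij)
    exact div_le_div₀ (by positivity) (four_anti hij) (hden i) (by linarith)
  · refine squeeze_zero (fun k => by have := hden k; positivity) (fun k => ?_) four_lim
    exact div_le_self (by positivity) (by linarith [@ENNReal.toReal_nonneg (A k)])
  · refine ne_top_of_le_ne_top four_sum (ENNReal.tsum_le_tsum fun k => ?_)
    have h0 : 0 ≤ (A k).toReal := ENNReal.toReal_nonneg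
    calc ENNReal.ofReal (2 ^ (k + 1) * ((1 / 4 : ℝ) ^ k / (1 + (A k).toReal))) * A k
        = ENNReal.ofReal (2 ^ (k + 1) * ((1 / 4 : ℝ) ^ k / (1 + (A k).toReal)) * (A k).toReal) := by
          rw [ENNReal.ofReal_mul (q := (A k).toReal) (by have := hden k; positivity),
            ENNReal.ofReal_toReal (hfin k).ne]
      _ ≤ _ := by
          refine ENNReal.ofReal_le_ofReal ?_
          have h1 : (A k).toReal / (1 + (A k).toReal) ≤ 1 := by
            rw [div_le_one (hden k)]; linarith
          have : (2:ℝ) ^ (k + 1) * ((1 / 4 : ℝ) ^ k / (1 + (A k).toReal)) * (A k).toReal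
              = 2 ^ (k + 1) * (1 / 4 : ℝ) ^ k * ((A k).toReal / (1 + (A k).toReal)) := by ring
          rw [this]
          exact mul_le_of_le_one_right (by positivity) h1

lemma half_sum {α : ℕ → ℝ} (hα : ∀ k, 0 < α k) {A : ℕ → ENNReal}
    (h : ∑' k, ENNReal.ofReal (2 ^ (k + 1) * α k) * A k ≠ ⊤) :
    ∑' k, ENNReal.ofReal (2 ^ k * α k) * A k ≠ ⊤ := by
  refine ne_top_of_le_ne_top h (ENNReal.tsum_le_tsum fun k => ?_)
  gcongr
  · exact (hα k).le
  · norm_num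
  · omega

lemma four_mul_sum {A : ℕ → ENNReal} {C : ENNReal} (hC : C < ⊤) (hA : ∀ k, A k ≤ C) :
    ∑' k, ENNReal.ofReal (2 ^ (k + 1) * (1 / 4 : ℝ) ^ k) * A k ≠ ⊤ := by
  refine ne_top_of_le_ne_top (b := (∑' k : ℕ, ENNReal.ofReal (2 ^ (k + 1) * (1 / 4 : ℝ) ^ k)) * C)
    (ENNReal.mul_ne_top four_sum hC.ne) ?_
  rw [← ENNReal.tsum_mul_right]
  exact ENNReal.tsum_le_tsum fun k => by gcongr; exact hA k

lemma pos_reduction {f g : ℝ → ℝ} {a b : ℝ} (hab : a < b)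
    (hf : Regulated f a b) (hg : Regulated g a b)
    (η θ : ℕ → ℝ) (hηnn : ∀ k, 0 ≤ η k) (hθnn : ∀ k, 0 ≤ θ k)
    (hηa : Antitone η) (hθa : Antitone θ)
    (hηlim : Tendsto η atTop (nhds 0)) (hθlim : Tendsto θ atTop (nhds 0))
    (e : ℝ) (he : ∀ u ∈ Set.Icc a b, |f u - f a| ≤ e)
    (h1 : (∑' k : ℕ, ENNReal.ofReal ((2 : ℝ) ^ k * (if k = 0 then e else η (k - 1))) *
            truncVar g (θ k) a b) ≠ ⊤)
    (h2 : ∑' k : ℕ, ENNReal.ofReal ((2 : ℝ) ^ k * θ k) * truncVar f (η k) a b ≠ ⊤) :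
    ∃ η' θ' : ℕ → ℝ, (∀ k, 0 < η' k) ∧ (∀ k, 0 < θ' k) ∧ Antitone η' ∧ Antitone θ' ∧
      Tendsto η' atTop (nhds 0) ∧ Tendsto θ' atTop (nhds 0) ∧
      ∑' k, ENNReal.ofReal (2 ^ (k + 1) * η' k) * truncVar g (θ' (k + 1)) a b ≠ ⊤ ∧
      ∑' k, ENNReal.ofReal (2 ^ k * θ' k) * truncVar f (η' k) a b ≠ ⊤ := by
  have h4 : ∀ k : ℕ, 0 < (1 / 4 : ℝ) ^ k := fun k => by positivity
  by_cases hF : truncVar f 0 a b < ⊤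
  · obtain ⟨α, hα, hαa, hαl, hαs⟩ := geo_seq (fun k => truncVar g ((1 / 4 : ℝ) ^ (k + 1)) a b)
      (fun i j hij => truncVar_anti (four_anti (by omega))) (fun k => truncVar_lt_top hab hg (h4 _))
    exact ⟨α, fun k => (1 / 4 : ℝ) ^ k, hα, h4, hαa, four_anti, hαl, four_lim, hαs,
      half_sum h4 (four_mul_sum hF fun k => truncVar_anti (hα k).le)⟩
  by_cases hG : truncVar g 0 a b < ⊤
  · obtain ⟨α, hα, hαa, hαl, hαs⟩ := geo_seq (fun k => truncVar f ((1 / 4 : ℝ) ^ k) a b)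
      (fun i j hij => truncVar_anti (four_anti hij)) (fun k => truncVar_lt_top hab hf (h4 _))
    exact ⟨fun k => (1 / 4 : ℝ) ^ k, α, h4, hα, four_anti, hαa, four_lim, hαl,
      four_mul_sum hG fun k => truncVar_anti (hα _).le, half_sum hα hαs⟩
  have hF' : truncVar f 0 a b = ⊤ := not_lt_top_iff.1 hF
  have hG' : truncVar g 0 a b = ⊤ := not_lt_top_iff.1 hG
  have he0 : 0 < e := by
    by_contra hcon
    apply hF
    have hc : ∀ u ∈ Set.Icc a b, f u = f a := fun u hu => by
      have := abs_le.1 ((he u hu).trans (not_lt.1 hcon)); linarith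
    refine lt_of_le_of_lt (truncVar_le_of_control (H := fun _ => 0) (fun u hu v hv _ => ?_)
      (fun _ _ _ _ _ => le_rfl)) ENNReal.ofReal_lt_top
    rw [hc u hu, hc v hv]; simp
  have step1 : ∀ k, 0 < (if k = 0 then e else η (k - 1)) → 0 < θ k := by
    intro k hk
    refine (hθnn k).lt_of_ne fun h0 => ?_
    apply ENNReal.ne_top_of_tsum_ne_top h1 k
    rw [← h0, hG']
    refine ENNReal.mul_top ?_
    have : 0 < (2:ℝ) ^ k * (if k = 0 then e else η (k - 1)) := by positivity
    simpa using this
  have step2 : ∀ k, 0 < θ k → 0 < η k := by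
    intro k hk
    refine (hηnn k).lt_of_ne fun h0 => ?_
    apply ENNReal.ne_top_of_tsum_ne_top h2 k
    rw [← h0, hF']
    refine ENNReal.mul_top ?_
    have : 0 < (2:ℝ) ^ k * θ k := by positivity
    simpa using this
  have hη0 : ∀ k, 0 < η k := by
    intro k
    induction k with
    | zero => exact step2 0 (step1 0 (by simpa using he0))
    | succ k ih => exact step2 _ (step1 _ (by simpa using ih))
  have hθ0 : ∀ k, 0 < θ k := fun k => step1 k (by split_ifs <;> [exact he0; exact hη0 _])
  refine ⟨η, θ, hη0, hθ0, hηa, hθa, hηlim, hθlim, ?_, h2⟩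
  refine ne_top_of_le_ne_top h1 ?_
  have := ENNReal.tsum_comp_le_tsum_of_injective (f := fun k : ℕ => k + 1) (add_left_injective 1)
    (fun k : ℕ => ENNReal.ofReal ((2 : ℝ) ^ k * (if k = 0 then e else η (k - 1))) *
            truncVar g (θ k) a b)
  simpa using this

lemma IsRS.mono {f g : ℝ → ℝ} {a b δ δ' x : ℝ} (h : IsRS f g a b δ x) (hd : δ ≤ δ') :
    IsRS f g a b δ' x := by
  obtain ⟨n, t, ξ, h1, h2, h3, h4, h5, h6⟩ := h
  exact ⟨n, t, ξ, h1, h2, h3, h4, fun i => (h5 i).trans_le hd, h6⟩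

lemma exists_IsRS (f g : ℝ → ℝ) {a b δ : ℝ} (hab : a < b) (hδ : 0 < δ) :
    ∃ x, IsRS f g a b δ x := by
  obtain ⟨n, hn⟩ := exists_nat_gt ((b - a) / δ)
  have hn0 : (0:ℝ) < n := lt_of_le_of_lt (div_nonneg (by linarith) hδ.le) hn
  have hq : (b - a) / n < δ := by
    rw [div_lt_iff₀ hδ] at hn
    rw [div_lt_iff₀ hn0]; linarith
  have hq0 : 0 < (b - a) / n := div_pos (by linarith) hn0
  refine ⟨_, n, fun i => a + (b - a) / n * (i : ℕ), fun i => a + (b - a) / n * (i : ℕ),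
    ?_, by simp, ?_, ?_, ?_, rfl⟩
  · intro i j hij
    have : ((i : ℕ) : ℝ) < (j : ℕ) := by exact_mod_cast hij
    simp only
    nlinarith
  · simp only [Fin.val_last]
    field_simp
    ring
  · intro i
    simp only [Fin.val_castSucc, Fin.val_succ, Nat.cast_add, Nat.cast_one]
    constructor
    · exact le_rfl
    · linarith
  · intro i
    simp only [Fin.val_castSucc, Fin.val_succ, Nat.cast_add, Nat.cast_one]
    linarith

/-- Theorem 1 (main): existence of the Riemann–Stieltjes integral and the estimate `≤ S`. -/
theorem rs_integral_exists_of_truncVar_sum_lt_top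
    (a b : ℝ) (hab : a < b) (f g : ℝ → ℝ)
    (hf : Regulated f a b) (hg : Regulated g a b)
    (hfg : NoCommonDiscont f g a b)
    (η θ : ℕ → ℝ) (hηnn : ∀ k, 0 ≤ η k) (hθnn : ∀ k, 0 ≤ θ k)
    (hηa : Antitone η) (hθa : Antitone θ)
    (hηlim : Tendsto η atTop (nhds 0)) (hθlim : Tendsto θ atTop (nhds 0))
    (ηm1 : ℝ) (hηm1 : ηm1 = sSup {x | ∃ t ∈ Set.Icc a b, x = |f t - f a|})
    (S : ENNReal)
    (hS : S = (∑' k : ℕ,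
          ENNReal.ofReal ((2 : ℝ) ^ k * (if k = 0 then ηm1 else η (k - 1))) *
            truncVar g (θ k) a b)
        + ∑' k : ℕ, ENNReal.ofReal ((2 : ℝ) ^ k * θ k) * truncVar f (η k) a b)
    (hSfin : S < ⊤) :
    ∃ I : ℝ, RSIntegral f g a b I ∧
      ENNReal.ofReal |I - f a * (g b - g a)| ≤ S := by
  have he : ∀ u ∈ Set.Icc a b, |f u - f a| ≤ ηm1 := by
    intro u hu
    obtain ⟨M, -, hM⟩ := reg_bdd hab hf
    rw [hηm1]
    refine le_csSup ⟨2 * M, ?_⟩ ⟨u, hu, rfl⟩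
    rintro x ⟨t, ht, rfl⟩
    have h1 := hM t ht
    have h2 := hM a ⟨le_rfl, hab.le⟩
    have := abs_sub (f t) (f a)
    linarith
  rw [hS] at hSfin
  obtain ⟨hs1, hs2⟩ := ENNReal.add_lt_top.1 hSfin
  obtain ⟨η', θ', p1, p2, p3, p4, p5, p6, p7, p8⟩ :=
    pos_reduction hab hf hg η θ hηnn hθnn hηa hθa hηlim hθlim ηm1 he hs1.ne hs2.ne
  have hC : ∀ ε : ℝ, 0 < ε → ∃ δ > 0, ∀ x x', IsRS f g a b δ x → IsRS f g a b δ x' →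
      |x - x'| ≤ ε := fun ε hε => cauchy_RS hab hf hg hfg p1 p2 p3 p4 p5 p6 p7 p8 hε
  have hex : ∀ n : ℕ, ∃ x, IsRS f g a b (1 / ((n:ℝ) + 1)) x := fun n =>
    exists_IsRS f g hab (by positivity)
  choose x hx using hex
  have hsmall : ∀ δ : ℝ, 0 < δ → ∃ N : ℕ, ∀ n ≥ N, IsRS f g a b δ (x n) := by
    intro δ hδ
    obtain ⟨N, hN⟩ := exists_nat_one_div_lt hδ
    refine ⟨N, fun n hn => (hx n).mono ?_⟩
    refine le_trans ?_ hN.le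
    have : (N:ℝ) ≤ n := by exact_mod_cast hn
    gcongr
  have hcs : CauchySeq x := by
    rw [Metric.cauchySeq_iff]
    intro ε hε
    obtain ⟨δ, hδ, h⟩ := hC (ε / 2) (by linarith)
    obtain ⟨N, hN⟩ := hsmall δ hδ
    refine ⟨N, fun m hm n hn => ?_⟩
    rw [Real.dist_eq]
    linarith [h _ _ (hN m hm) (hN n hn)]
  obtain ⟨I, hI⟩ := cauchySeq_tendsto_of_complete hcs
  refine ⟨I, ?_, ?_⟩
  · intro ε hε
    obtain ⟨δ, hδ, h⟩ := hC (ε / 2) (by linarith)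
    obtain ⟨N, hN⟩ := hsmall δ hδ
    refine ⟨δ, hδ, fun n t ξ h1 h2 h3 h4 h5 => ?_⟩
    have hy : IsRS f g a b δ (∑ i : Fin n, f (ξ i) * (g (t i.succ) - g (t i.castSucc))) :=
      ⟨n, t, ξ, h1, h2, h3, h4, h5, rfl⟩
    have hlim : |∑ i : Fin n, f (ξ i) * (g (t i.succ) - g (t i.castSucc)) - I| ≤ ε / 2 := by
      refine le_of_tendsto ((tendsto_const_nhds.sub hI).abs) ?_
      filter_upwards [eventually_ge_atTop N] with n hn
      exact h _ _ hy (hN n hn)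
    linarith
  · rw [hS]
    refine le_of_tendsto' (ENNReal.tendsto_ofReal ((hI.sub_const (f a * (g b - g a))).abs))
      fun n => ?_
    exact main_bound hab hf hg η θ hηnn hθnn hηa hθa hηlim hθlim ηm1 he (hx n)
end

section
/- Let f, g : [a;b] → ℝ be regulated functions, let [c;d] ⊆ [a;b], let c = t_0 < t_1 < ... < t_n = d be a partition of [c;d], let ξ_0 = c and let ξ_1, ..., ξ_n satisfy t_{i−1} ≤ ξ_i ≤ t_i for i = 1, ..., n. Set δ_{−1} := sup_{c≤t≤d} |f(t) − f(c)|, and let δ_0 ≥ δ_1 ≥ ... ≥ δ_r ≥ 0 and ε_0 ≥ ε_1 ≥ ... ≥ ε_r ≥ 0 be finite nonincreasing sequences of non-negative reals. Then |Σ_{i=1}^n f(ξ_i)(g(t_i) − g(t_{i−1})) − f(c)·(g(d) − g(c))| ≤ Σ_{k=0}^r 2^k · δ_{k−1} · TV^{ε_k}(g,[c;d]) + Σ_{k=0}^r 2^k · ε_k · TV^{δ_k}(f,[c;d]) + n·δ_r·ε_r. -/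
open Filter Set

theorem ofReal_sum_le' (s : Finset ℕ) (F : ℕ → ℝ) :
    ENNReal.ofReal (∑ k ∈ s, F k) ≤ ∑ k ∈ s, ENNReal.ofReal (F k) :=
  Finset.le_sum_of_subadditive _ ENNReal.ofReal_zero.le (fun _ _ => ENNReal.ofReal_add_le) s F

inductive Ch (x : ℕ → ℝ) (δ : ℝ) : ℕ → ℝ → Prop
  | single (j : ℕ) : Ch x δ j 0
  | step (i j : ℕ) (c : ℝ) (h : Ch x δ i c) (hij : i < j) : Ch x δ j (c + (|x j - x i| - δ))

theorem Ch.mono_delta {x : ℕ → ℝ} {δ δ' : ℝ} (hd : δ ≤ δ') {j : ℕ} {c : ℝ}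
    (h : Ch x δ' j c) : ∃ c', Ch x δ j c' ∧ c ≤ c' := by
  induction h with
  | single j => exact ⟨0, Ch.single j, le_rfl⟩
  | step i j c h hij ih =>
    obtain ⟨c', h1, h2⟩ := ih
    exact ⟨_, Ch.step i j c' h1 hij, by linarith⟩

theorem abs_sub_le_tv (u : ℕ → ℝ) {i j : ℕ} (hij : i ≤ j) :
    ∑ k ∈ Finset.range i, |u (k+1) - u k| + |u j - u i| ≤ ∑ k ∈ Finset.range j, |u (k+1) - u k| := by
  induction j, hij using Nat.le_induction with
  | base => simp
  | succ j hij ih =>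
    rw [Finset.sum_range_succ]
    have := abs_sub_le (u (j+1)) (u j) (u i)
    linarith

theorem Ch.sub {x u : ℕ → ℝ} {δ : ℝ} {j : ℕ} {c : ℝ}
    (h : Ch (fun i => x i - u i) δ j c) :
    ∃ c', Ch x δ j c' ∧ c ≤ c' + ∑ k ∈ Finset.range j, |u (k+1) - u k| := by
  induction h with
  | single j => exact ⟨0, Ch.single j, by simpa using Finset.sum_nonneg (fun _ _ => abs_nonneg _)⟩
  | step i j c h hij ih =>
    obtain ⟨c', h1, h2⟩ := ih
    refine ⟨_, Ch.step i j c' h1 hij, ?_⟩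
    have h3 := abs_sub_le_tv u hij.le
    have h4 : |x j - u j - (x i - u i)| ≤ |x j - x i| + |u j - u i| := by
      have := abs_sub (x j - x i) (u j - u i)
      rwa [show x j - u j - (x i - u i) = x j - x i - (u j - u i) by ring]
    linarith

theorem Ch.le_tv {x : ℕ → ℝ} {δ : ℝ} (hδ : 0 ≤ δ) {j : ℕ} {c : ℝ} (h : Ch x δ j c) :
    c ≤ ∑ k ∈ Finset.range j, |x (k+1) - x k| := by
  induction h with
  | single j => exact Finset.sum_nonneg (fun _ _ => abs_nonneg _)
  | step i j c h hij ih =>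
    have h3 := abs_sub_le_tv x hij.le
    linarith

theorem tube_aux (x : ℕ → ℝ) (δ : ℝ) (hδ : 0 ≤ δ) (k : ℕ) : ∀ z : ℝ,
    ∃ u : ℕ → ℝ, (∀ i ≤ k, |x i - u i| ≤ δ / 2) ∧ ∃ j ≤ k, ∃ c, Ch x δ j c ∧
      ∑ i ∈ Finset.range k, |u (i+1) - u i| + |z - u k| ≤ c + max (|z - x j| - δ / 2) 0 := by
  induction k with
  | zero =>
    intro z
    refine ⟨fun _ => max (x 0 - δ/2) (min z (x 0 + δ/2)), ?_, 0, le_rfl, 0, Ch.single 0, ?_⟩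
    · intro i hi
      obtain rfl : i = 0 := by omega
      grind
    · simp only [Finset.range_zero, Finset.sum_empty]
      grind
  | succ k ih =>
    intro z
    obtain ⟨p, hp⟩ : ∃ p, p = max (x (k+1) - δ/2) (min z (x (k+1) + δ/2)) := ⟨_, rfl⟩
    obtain ⟨u, hu, j, hj, c, hc, hle⟩ := ih p
    refine ⟨fun i => if i ≤ k then u i else p, ?_, ?_⟩
    · intro i hi
      by_cases h : i ≤ k
      · simpa [h] using hu i h
      · obtain rfl : i = k + 1 := by omega
        simp only [h, if_false]
        grind
    have hsum : ∑ i ∈ Finset.range (k+1), |(if i + 1 ≤ k then u (i+1) else p) - (if i ≤ k then u i else p)|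
        = ∑ i ∈ Finset.range k, |u (i+1) - u i| + |p - u k| := by
      rw [Finset.sum_range_succ]
      congr 1
      · apply Finset.sum_congr rfl
        intro i hi
        have := Finset.mem_range.1 hi
        rw [if_pos (by omega), if_pos (by omega)]
      · simp
    simp only [hsum]
    rw [if_neg (by omega)]
    suffices H : ∃ j' ≤ k + 1, ∃ c', Ch x δ j' c' ∧
        c + max (|p - x j| - δ/2) 0 + |z - p| ≤ c' + max (|z - x j'| - δ / 2) 0 by
      obtain ⟨j', hj', c', hc', hle'⟩ := H
      exact ⟨j', hj', c', hc', by linarith⟩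
    have hz : z = p ∨ (p < z ∧ p = x (k+1) + δ/2) ∨ (z < p ∧ p = x (k+1) - δ/2) := by grind
    rcases hz with hz | ⟨hz, hp'⟩ | ⟨hz, hp'⟩
    · exact ⟨j, by omega, c, hc, by simp [hz]⟩
    · rw [abs_of_pos (sub_pos.2 hz)]
      by_cases h1 : p < x j - δ/2
      · refine ⟨k+1, le_rfl, _, Ch.step j (k+1) c hc (by omega), ?_⟩
        clear hp hle hu hsum
        grind
      by_cases h2 : x j + δ/2 ≤ p
      · refine ⟨j, by omega, c, hc, ?_⟩
        clear hp hle hu hsum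
        grind
      clear hp hle hu hsum
      cases hc with
      | single => exact ⟨k+1, le_rfl, _, Ch.single _, by grind⟩
      | step i j c h hij =>
        by_cases h3 : x i ≤ x j
        · exact ⟨i, by omega, c, h, by grind⟩
        · exact ⟨k+1, le_rfl, _, Ch.step i (k+1) c h (by omega), by grind⟩
    · rw [abs_of_neg (sub_neg.2 hz)]
      by_cases h1 : x j + δ/2 < p
      · refine ⟨k+1, le_rfl, _, Ch.step j (k+1) c hc (by omega), ?_⟩
        clear hp hle hu hsum
        grind
      by_cases h2 : p ≤ x j - δ/2
      · refine ⟨j, by omega, c, hc, ?_⟩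
        clear hp hle hu hsum
        grind
      clear hp hle hu hsum
      cases hc with
      | single => exact ⟨k+1, le_rfl, _, Ch.single _, by grind⟩
      | step i j c h hij =>
        by_cases h3 : x j ≤ x i
        · exact ⟨i, by omega, c, h, by grind⟩
        · exact ⟨k+1, le_rfl, _, Ch.step i (k+1) c h (by omega), by grind⟩

theorem tube (x : ℕ → ℝ) (δ : ℝ) (hδ : 0 ≤ δ) (n : ℕ) (M : ℝ)
    (hM : ∀ j ≤ n, ∀ c, Ch x δ j c → c ≤ M) :
    ∃ u : ℕ → ℝ, (∀ i ≤ n, |x i - u i| ≤ δ / 2) ∧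
      ∑ i ∈ Finset.range n, |u (i+1) - u i| ≤ M := by
  have key : ∀ j ≤ n, ∀ c, Ch x δ j c → ∀ j' ≤ n, ∀ c', Ch x δ j' c' →
      c + x j - δ/2 ≤ 2 * M + (x j' + δ/2 - c') := by
    intro j hj c hc j' hj' c' hc'
    have e1 := hM j hj c hc
    have e2 := hM j' hj' c' hc'
    rcases lt_trichotomy j j' with h | h | h
    · have := hM _ hj' _ (Ch.step j j' c hc h)
      have := neg_abs_le (x j' - x j)
      linarith
    · subst h; linarith
    · have := hM _ hj _ (Ch.step j' j c' hc' h)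
      have := le_abs_self (x j - x j')
      linarith
  let S : Set ℝ := {s | ∃ j ≤ n, ∃ c, Ch x δ j c ∧ s = c + x j - δ/2}
  have hS : S.Nonempty := ⟨_, 0, Nat.zero_le _, 0, Ch.single 0, rfl⟩
  have hub : ∀ j' ≤ n, ∀ c', Ch x δ j' c' → (2 * M + (x j' + δ/2 - c')) ∈ upperBounds S := by
    rintro j' hj' c' hc' s ⟨j, hj, c, hc, rfl⟩
    exact key j hj c hc j' hj' c' hc'
  have hbdd : BddAbove S := ⟨_, hub 0 (Nat.zero_le _) 0 (Ch.single 0)⟩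
  obtain ⟨u, hu, j, hj, c, hc, hle⟩ := tube_aux x δ hδ n (sSup S - M)
  refine ⟨u, hu, ?_⟩
  have a1 : c + x j - δ/2 ≤ sSup S := le_csSup hbdd ⟨j, hj, c, hc, rfl⟩
  have a2 : sSup S ≤ 2 * M + (x j + δ/2 - c) := csSup_le hS (hub j hj c hc)
  have a3 := hM j hj c hc
  have a4 := abs_nonneg (sSup S - M - u n)
  have a5 : max (|sSup S - M - x j| - δ / 2) 0 ≤ M - c := by
    apply max_le _ (by linarith)
    have : |sSup S - M - x j| ≤ M - c + δ/2 := abs_le.2 ⟨by linarith, by linarith⟩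
    linarith
  linarith

theorem by_parts (x y : ℕ → ℝ) (n : ℕ) :
    ∑ i ∈ Finset.range n, (x (i+1) - x 0) * (y (i+1) - y i) =
    ∑ i ∈ Finset.range n, (x (i+1) - x i) * (y n - y i) := by
  induction n with
  | zero => simp
  | succ n ih =>
    rw [Finset.sum_range_succ, ih, Finset.sum_range_succ]
    have h1 : ∑ i ∈ Finset.range n, (x (i+1) - x i) * (y (n+1) - y i) =
      ∑ i ∈ Finset.range n, (x (i+1) - x i) * (y n - y i) + (x n - x 0) * (y (n+1) - y n) := by
      rw [← Finset.sum_range_sub, Finset.sum_mul, ← Finset.sum_add_distrib]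
      apply Finset.sum_congr rfl
      intros; ring
    rw [h1]; ring

theorem sum_bd (a b : ℕ → ℝ) (n : ℕ) (D : ℝ) (h : ∀ i < n, |a i| ≤ D) :
    |∑ i ∈ Finset.range n, a i * b i| ≤ D * ∑ i ∈ Finset.range n, |b i| := by
  rw [Finset.mul_sum]
  refine (Finset.abs_sum_le_sum_abs _ _).trans (Finset.sum_le_sum fun i hi => ?_)
  rw [abs_mul]
  exact mul_le_mul_of_nonneg_right (h i (Finset.mem_range.1 hi)) (abs_nonneg _)

theorem one_step (x y : ℕ → ℝ) (n : ℕ) (D δ ε A B : ℝ) (hD : 0 ≤ D) (hδ : 0 ≤ δ) (hε : 0 ≤ ε)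
    (hx : ∀ i ≤ n, |x i - x 0| ≤ D)
    (hA : ∀ j ≤ n, ∀ c, Ch y ε j c → c ≤ A)
    (hB : ∀ j ≤ n, ∀ c, Ch x δ j c → c ≤ B) :
    ∃ u v : ℕ → ℝ, (∀ i ≤ n, ∀ j ≤ n, |(x i - u i) - (x j - u j)| ≤ δ) ∧
      (∀ i ≤ n, ∀ j ≤ n, |(y i - v i) - (y j - v j)| ≤ ε) ∧
      ∑ i ∈ Finset.range n, |u (i+1) - u i| ≤ B ∧
      ∑ i ∈ Finset.range n, |v (i+1) - v i| ≤ A ∧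
      |∑ i ∈ Finset.range n, (x (i+1) - x 0) * (y (i+1) - y i)| ≤ D * A + ε * B +
      |∑ i ∈ Finset.range n, ((x (i+1) - u (i+1)) - (x 0 - u 0)) *
        ((y (i+1) - v (i+1)) - (y i - v i))| := by
  obtain ⟨u, hu, hu2⟩ := tube x δ hδ n B hB
  obtain ⟨v, hv, hv2⟩ := tube y ε hε n A hA
  have hosc : ∀ (p q : ℝ) (η : ℝ), |p| ≤ η/2 → |q| ≤ η/2 → |p - q| ≤ η := by
    intro p q η h1 h2
    have := abs_sub p q
    linarith
  have ho2 : ∀ i ≤ n, ∀ j ≤ n, |(y i - v i) - (y j - v j)| ≤ ε :=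
    fun i hi j hj => hosc _ _ _ (hv i hi) (hv j hj)
  refine ⟨u, v, fun i hi j hj => hosc _ _ _ (hu i hi) (hu j hj), ho2, hu2, hv2, ?_⟩
  have e1 : ∑ i ∈ Finset.range n, (x (i+1) - x 0) * (y (i+1) - y i) =
      ∑ i ∈ Finset.range n, (x (i+1) - x 0) * (v (i+1) - v i) +
      ∑ i ∈ Finset.range n, (x (i+1) - x 0) * ((y (i+1) - v (i+1)) - (y i - v i)) := by
    rw [← Finset.sum_add_distrib]
    exact Finset.sum_congr rfl fun i _ => by ring
  have e2 := by_parts x (fun i => y i - v i) n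
  have e3 := by_parts (fun i => x i - u i) (fun i => y i - v i) n
  have e4 : ∑ i ∈ Finset.range n, (x (i+1) - x i) * ((y n - v n) - (y i - v i)) =
      ∑ i ∈ Finset.range n, ((y n - v n) - (y i - v i)) * (u (i+1) - u i) +
      ∑ i ∈ Finset.range n, ((x (i+1) - u (i+1)) - (x i - u i)) * ((y n - v n) - (y i - v i)) := by
    rw [← Finset.sum_add_distrib]
    exact Finset.sum_congr rfl fun i _ => by ring
  rw [e1, e2, e4, ← e3]
  have b1 := sum_bd (fun i => x (i+1) - x 0) (fun i => v (i+1) - v i) n D (fun i hi => hx _ hi)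
  have b2 := sum_bd (fun i => (y n - v n) - (y i - v i)) (fun i => u (i+1) - u i) n ε
    (fun i hi => ho2 n le_rfl i hi.le)
  have c1 := mul_le_mul_of_nonneg_left hv2 hD
  have c2 := mul_le_mul_of_nonneg_left hu2 hε
  refine (abs_add_le _ _).trans ?_
  refine (add_le_add_right (abs_add_le _ _) _).trans ?_
  linarith

theorem main_real (n : ℕ) (r : ℕ) : ∀ (x y : ℕ → ℝ) (D : ℝ) (δ ε A B : ℕ → ℝ), 0 ≤ D →
    (∀ k ≤ r, 0 ≤ δ k) → (∀ k ≤ r, 0 ≤ ε k) → 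
    (∀ i ≤ n, |x i - x 0| ≤ D) →
    (∀ k ≤ r, ∀ j ≤ n, ∀ c, Ch y (ε k) j c → c ≤ A k) →
    (∀ k ≤ r, ∀ j ≤ n, ∀ c, Ch x (δ k) j c → c ≤ B k) →
    (∀ i j, i ≤ j → j ≤ r → A i ≤ A j) → (∀ i j, i ≤ j → j ≤ r → B i ≤ B j) →
    |∑ i ∈ Finset.range n, (x (i+1) - x 0) * (y (i+1) - y i)| ≤
      ∑ k ∈ Finset.range (r+1), (2:ℝ)^k * (if k = 0 then D else δ (k-1)) * A k
      + ∑ k ∈ Finset.range (r+1), (2:ℝ)^k * ε k * B k + n * δ r * ε r := by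
  induction r with
  | zero =>
    intro x y D δ ε A B hD hδ hε hx hA hB _ _
    obtain ⟨u, v, h1, h2, h3, h4, h5⟩ := one_step x y n D (δ 0) (ε 0) (A 0) (B 0) hD
      (hδ 0 le_rfl) (hε 0 le_rfl) hx (hA 0 le_rfl) (hB 0 le_rfl)
    have h6 := sum_bd (fun i => (x (i+1) - u (i+1)) - (x 0 - u 0))
      (fun i => (y (i+1) - v (i+1)) - (y i - v i)) n (δ 0) (fun i hi => h1 _ hi _ (Nat.zero_le _))
    have h7 : ∑ i ∈ Finset.range n, |(y (i+1) - v (i+1)) - (y i - v i)| ≤ n * ε 0 := by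
      have := Finset.sum_le_card_nsmul (Finset.range n)
        (fun i => |(y (i+1) - v (i+1)) - (y i - v i)|) (ε 0)
        (fun i hi => h2 _ (Finset.mem_range.1 hi) _ (Finset.mem_range.1 hi).le)
      simpa using this
    have h8 := mul_le_mul_of_nonneg_left h7 (hδ 0 le_rfl)
    simp
    linarith
  | succ r ih =>
    intro x y D δ ε A B hD hδ hε hx hA hB mA mB
    obtain ⟨u, v, h1, h2, h3, h4, h5⟩ := one_step x y n D (δ 0) (ε 0) (A 0) (B 0) hD
      (hδ 0 (by omega)) (hε 0 (by omega)) hx (hA 0 (by omega)) (hB 0 (by omega))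
    have tvm : ∀ (w : ℕ → ℝ) (j : ℕ), j ≤ n → ∑ i ∈ Finset.range j, |w (i+1) - w i| ≤
        ∑ i ∈ Finset.range n, |w (i+1) - w i| := fun w j hj =>
      Finset.sum_le_sum_of_subset_of_nonneg (by simpa using hj) (fun _ _ _ => abs_nonneg _)
    have h6 := ih (fun i => x i - u i) (fun i => y i - v i) (δ 0) (fun k => δ (k+1))
      (fun k => ε (k+1)) (fun k => 2 * A (k+1)) (fun k => 2 * B (k+1)) (hδ 0 (by omega))
      (fun k hk => hδ _ (by omega)) (fun k hk => hε _ (by omega))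
      (fun i hi => h1 _ hi _ (Nat.zero_le _))
      (by
        intro k hk j hj c hc
        obtain ⟨c', h, hle⟩ := hc.sub
        have := hA (k+1) (by omega) j hj c' h
        have := mA 0 (k+1) (by omega) (by omega)
        have := tvm v j hj
        linarith)
      (by
        intro k hk j hj c hc
        obtain ⟨c', h, hle⟩ := hc.sub
        have := hB (k+1) (by omega) j hj c' h
        have := mB 0 (k+1) (by omega) (by omega)
        have := tvm u j hj
        linarith)
      (fun i j hij hj => by have := mA (i+1) (j+1) (by omega) (by omega); linarith)
      (fun i j hij hj => by have := mB (i+1) (j+1) (by omega) (by omega); linarith)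
    rw [Finset.sum_range_succ' _ (r+1), Finset.sum_range_succ' _ (r+1)]
    have s1 : ∑ k ∈ Finset.range (r+1), (2:ℝ)^k * (if k = 0 then δ 0 else δ (k-1+1)) * (2 * A (k+1))
        = ∑ k ∈ Finset.range (r+1), (2:ℝ)^(k+1) * (if k + 1 = 0 then D else δ (k+1-1)) * A (k+1) := by
      apply Finset.sum_congr rfl
      intro k _
      rcases k with _ | k
      · simp; ring
      · simp; ring
    have s2 : ∑ k ∈ Finset.range (r+1), (2:ℝ)^k * ε (k+1) * (2 * B (k+1))
        = ∑ k ∈ Finset.range (r+1), (2:ℝ)^(k+1) * ε (k+1) * B (k+1) := by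
      apply Finset.sum_congr rfl
      intro k _
      ring
    rw [s1, s2] at h6
    simp only [pow_zero, if_true, one_mul]
    linarith

theorem ch_truncVar (f : ℝ → ℝ) (s : ℕ → ℝ) (n : ℕ) (c d δ : ℝ) (hδ : 0 ≤ δ)
    (hs : ∀ i j, i ≤ j → j ≤ n → s i ≤ s j) (hm : ∀ i ≤ n, s i ∈ Set.Icc c d) {j : ℕ} {v : ℝ}
    (h : Ch (fun i => f (s i)) δ j v) (hj : j ≤ n) :
    ENNReal.ofReal v ≤ truncVar f δ c d := by
  suffices H : ∃ (m : ℕ) (τ : Fin (m+1) → ℝ), StrictMono τ ∧ (∀ i, τ i ∈ Set.Icc c d) ∧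
      τ (Fin.last m) = s j ∧ ENNReal.ofReal v ≤
        ∑ i : Fin m, ENNReal.ofReal (|f (τ i.succ) - f (τ i.castSucc)| - δ) by
    obtain ⟨m, τ, h1, h2, -, h4⟩ := H
    refine h4.trans ?_
    unfold truncVar
    exact le_iSup_of_le m (le_iSup_of_le τ (le_iSup_of_le h1 (le_iSup_of_le h2 le_rfl)))
  induction h with
  | single j =>
    exact ⟨0, fun _ => s j, fun p q h => absurd h (by omega), fun _ => hm j hj, rfl, by simp⟩
  | step i j v h hij ih =>
    obtain ⟨m, τ, h1, h2, h3, h4⟩ := ih (by omega)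
    rcases (hs i j hij.le hj).eq_or_lt with he | hlt
    · refine ⟨m, τ, h1, h2, h3.trans he, le_trans (ENNReal.ofReal_le_ofReal ?_) h4⟩
      simp [he, hδ]
    · refine ⟨m+1, Fin.snoc τ (s j), ?_, ?_, by simp, ?_⟩
      · rw [Fin.strictMono_iff_lt_succ]
        intro k
        refine Fin.lastCases ?_ (fun k => ?_) k
        · rw [Fin.succ_last, Fin.snoc_last, Fin.snoc_castSucc, h3]; exact hlt
        · rw [← Fin.castSucc_succ, Fin.snoc_castSucc, Fin.snoc_castSucc]
          exact h1 (Fin.castSucc_lt_succ)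
      · intro k
        refine Fin.lastCases ?_ (fun k => ?_) k
        · simpa using hm j hj
        · simpa using h2 k
      · rw [Fin.sum_univ_castSucc]
        refine ENNReal.ofReal_add_le.trans (add_le_add (h4.trans (le_of_eq ?_)) (le_of_eq ?_))
        · apply Finset.sum_congr rfl
          intro k _
          rw [← Fin.castSucc_succ, Fin.snoc_castSucc, Fin.snoc_castSucc]
        · rw [Fin.succ_last, Fin.snoc_last, Fin.snoc_castSucc, h3]

theorem exists_T (x : ℕ → ℝ) (n : ℕ) : ∃ T : ℝ → ℝ,
    (∀ δ, 0 ≤ δ → ∀ j ≤ n, ∀ c, Ch x δ j c → c ≤ T δ) ∧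
    (∀ δ δ', 0 ≤ δ → δ ≤ δ' → T δ' ≤ T δ) ∧
    (∀ δ, 0 ≤ δ → ∀ K : ENNReal, (∀ j ≤ n, ∀ c, Ch x δ j c → ENNReal.ofReal c ≤ K) →
      ENNReal.ofReal (T δ) ≤ K) := by
  have hb : ∀ δ, 0 ≤ δ → BddAbove {c | ∃ j ≤ n, Ch x δ j c} := by
    intro δ hδ
    refine ⟨∑ k ∈ Finset.range n, |x (k+1) - x k|, ?_⟩
    rintro c ⟨j, hj, hc⟩
    exact (hc.le_tv hδ).trans
      (Finset.sum_le_sum_of_subset_of_nonneg (by simpa using hj) (fun _ _ _ => abs_nonneg _))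
  have hne : ∀ δ, {c | ∃ j ≤ n, Ch x δ j c}.Nonempty := fun δ => ⟨0, 0, Nat.zero_le _, Ch.single 0⟩
  refine ⟨fun δ => sSup {c | ∃ j ≤ n, Ch x δ j c}, ?_, ?_, ?_⟩
  · intro δ hδ j hj c hc
    exact le_csSup (hb δ hδ) ⟨j, hj, hc⟩
  · intro δ δ' hδ hle
    apply csSup_le (hne _)
    rintro c ⟨j, hj, hc⟩
    obtain ⟨c', h1, h2⟩ := hc.mono_delta hle
    exact h2.trans (le_csSup (hb δ hδ) ⟨j, hj, h1⟩)
  · intro δ hδ K hK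
    by_cases hT : K = ⊤
    · simp [hT]
    · rw [ENNReal.ofReal_le_iff_le_toReal hT]
      apply csSup_le (hne _)
      rintro c ⟨j, hj, hc⟩
      exact (ENNReal.ofReal_le_iff_le_toReal hT).1 (hK j hj c hc)

theorem regulated_bdd (f : ℝ → ℝ) (a b : ℝ) (hf : Regulated f a b) :
    ∃ M : ℝ, ∀ x ∈ Set.Icc a b, |f x| ≤ M := by
  obtain ⟨⟨La, ha⟩, ⟨Lb, hb⟩, hi⟩ := hf
  have hloc : ∀ (l : Filter ℝ) (L : ℝ), Tendsto f l (nhds L) → ∃ M, ∀ᶠ x in l, |f x| ≤ M := by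
    intro l L h
    exact ⟨|L| + 1, (h.abs.eventually_le_const (lt_add_one _))⟩
  refine isCompact_Icc.induction_on (p := fun s => ∃ M : ℝ, ∀ x ∈ s, |f x| ≤ M) ?_ ?_ ?_ ?_
  · exact ⟨0, by simp⟩
  · rintro s t hst ⟨M, hM⟩
    exact ⟨M, fun x hx => hM x (hst hx)⟩
  · rintro s t ⟨M, hM⟩ ⟨N, hN⟩
    exact ⟨max M N, fun x hx => hx.elim (fun h => (hM x h).trans (le_max_left _ _))
      (fun h => (hN x h).trans (le_max_right _ _))⟩
  · intro x hx
    have main : ∃ M, ∀ᶠ y in nhdsWithin x (Set.Icc a b), |f y| ≤ M := by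
      have hp : ∀ S : Set ℝ, (∃ M, ∀ᶠ y in nhdsWithin x S, |f y| ≤ M) →
          ∀ S' : Set ℝ, S' ⊆ insert x S → ∃ M, ∀ᶠ y in nhdsWithin x S', |f y| ≤ M := by
        rintro S ⟨M, hM⟩ S' hS
        refine ⟨max M |f x|, ?_⟩
        refine Filter.Eventually.filter_mono (nhdsWithin_mono x hS) ?_
        rw [nhdsWithin_insert, eventually_sup]
        exact ⟨by simp, hM.mono fun y hy => hy.trans (le_max_left _ _)⟩
      rcases hx.1.eq_or_lt with rfl | h1
      · exact hp _ (hloc _ _ ha) _ (fun y hy => by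
          rcases hy.1.eq_or_lt with h | h
          · exact Or.inl h.symm
          · exact Or.inr h)
      rcases hx.2.eq_or_lt with rfl | h2
      · exact hp _ (hloc _ _ hb) _ (fun y hy => by
          rcases hy.2.eq_or_lt with h | h
          · exact Or.inl h
          · exact Or.inr h)
      obtain ⟨⟨L1, hL1⟩, ⟨L2, hL2⟩⟩ := hi x ⟨h1, h2⟩
      obtain ⟨M1, hM1⟩ := hloc _ _ hL1
      obtain ⟨M2, hM2⟩ := hloc _ _ hL2
      refine hp (Set.Iio x ∪ Set.Ioi x) ⟨max M1 M2, ?_⟩ _ (fun y _ => by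
        rcases lt_trichotomy y x with h | h | h
        · exact Or.inr (Or.inl h)
        · exact Or.inl h
        · exact Or.inr (Or.inr h))
      rw [nhdsWithin_union, eventually_sup]
      exact ⟨hM1.mono fun y hy => hy.trans (le_max_left _ _),
        hM2.mono fun y hy => hy.trans (le_max_right _ _)⟩
    obtain ⟨M, hM⟩ := main
    exact ⟨_, hM, M, fun y hy => hy⟩


/-- Lemma 1: estimate for Riemann–Stieltjes sums over a partition of `[c;d] ⊆ [a;b]`. -/
theorem rs_sum_estimate
    (a b c d : ℝ) (hac : a ≤ c) (hcd : c ≤ d) (hdb : d ≤ b)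
    (f g : ℝ → ℝ) (hf : Regulated f a b) (hg : Regulated g a b)
    (n : ℕ) (t : Fin (n + 1) → ℝ) (ht : StrictMono t)
    (ht0 : t 0 = c) (htn : t (Fin.last n) = d)
    (ξ : Fin (n + 1) → ℝ) (hξ0 : ξ 0 = c)
    (hξ : ∀ i : Fin n, t i.castSucc ≤ ξ i.succ ∧ ξ i.succ ≤ t i.succ)
    (r : ℕ) (δ ε : ℕ → ℝ)
    (hδnn : ∀ k ≤ r, 0 ≤ δ k) (hεnn : ∀ k ≤ r, 0 ≤ ε k)
    (hδa : ∀ k < r, δ (k + 1) ≤ δ k) (hεa : ∀ k < r, ε (k + 1) ≤ ε k)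
    (δm1 : ℝ) (hδm1 : δm1 = sSup {x | ∃ s ∈ Set.Icc c d, x = |f s - f c|}) :
    ENNReal.ofReal
        |∑ i : Fin n, f (ξ i.succ) * (g (t i.succ) - g (t i.castSucc)) -
          f c * (g d - g c)|
      ≤ (∑ k ∈ Finset.range (r + 1),
            ENNReal.ofReal ((2 : ℝ) ^ k * (if k = 0 then δm1 else δ (k - 1))) *
              truncVar g (ε k) c d)
        + (∑ k ∈ Finset.range (r + 1),
            ENNReal.ofReal ((2 : ℝ) ^ k * ε k) * truncVar f (δ k) c d)
        + ENNReal.ofReal ((n : ℝ) * δ r * ε r) := by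
  obtain ⟨Mf, hMf⟩ := regulated_bdd f a b hf
  have hδm : ∀ s ∈ Set.Icc c d, |f s - f c| ≤ δm1 := by
    intro s hs
    rw [hδm1]
    refine le_csSup ⟨Mf + Mf, ?_⟩ ⟨s, hs, rfl⟩
    rintro _ ⟨w, hw, rfl⟩
    have h1 := hMf w ⟨hac.trans hw.1, hw.2.trans hdb⟩
    have h2 := hMf c ⟨hac, hcd.trans hdb⟩
    have := abs_sub (f w) (f c)
    linarith
  have hD : 0 ≤ δm1 := by simpa using hδm c ⟨le_rfl, hcd⟩
  obtain ⟨s, hs⟩ : ∃ s : ℕ → ℝ, ∀ i : Fin (n+1), s i = t i :=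
    ⟨fun i => if h : i < n + 1 then t ⟨i, h⟩ else 0, fun i => by simp [i.2]⟩
  obtain ⟨z, hz⟩ : ∃ z : ℕ → ℝ, ∀ i : Fin (n+1), z i = ξ i :=
    ⟨fun i => if h : i < n + 1 then ξ ⟨i, h⟩ else 0, fun i => by simp [i.2]⟩
  have hs0 : s 0 = c := by rw [← ht0, ← hs 0]; rfl
  have hsn : s n = d := by rw [← htn, ← hs (Fin.last n)]; rfl
  have hz0 : z 0 = c := by rw [← hξ0, ← hz 0]; rfl
  have hsmono : ∀ i j, i ≤ j → j ≤ n → s i ≤ s j := by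
    intro i j hij hj
    have := ht.monotone (show (⟨i, by omega⟩ : Fin (n+1)) ≤ ⟨j, by omega⟩ from hij)
    rwa [← hs, ← hs] at this
  have hzs : ∀ i < n, s i ≤ z (i+1) ∧ z (i+1) ≤ s (i+1) := by
    intro i hi
    have := hξ ⟨i, hi⟩
    rw [← hs, ← hs, ← hz] at this
    exact this
  have hz1 : ∀ i ≤ n, z i ≤ s i := by
    intro i hi
    rcases i with _ | i
    · rw [hz0, hs0]
    · exact (hzs i hi).2
  have hzmono : ∀ i j, i ≤ j → j ≤ n → z i ≤ z j := by
    intro i j hij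
    induction j, hij using Nat.le_induction with
    | base => intro _; exact le_rfl
    | succ j hij ih =>
      intro hj
      exact (ih (by omega)).trans ((hz1 j (by omega)).trans (hzs j hj).1)
  have hsI : ∀ i ≤ n, s i ∈ Set.Icc c d := fun i hi =>
    ⟨hs0 ▸ hsmono 0 i (Nat.zero_le _) hi, hsn ▸ hsmono i n hi le_rfl⟩
  have hzI : ∀ i ≤ n, z i ∈ Set.Icc c d := fun i hi =>
    ⟨hz0 ▸ hzmono 0 i (Nat.zero_le _) hi, (hz1 i hi).trans (hsI i hi).2⟩
  obtain ⟨Tg, g1, g2, g3⟩ := exists_T (fun i => g (s i)) n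
  obtain ⟨Tf, f1, f2, f3⟩ := exists_T (fun i => f (z i)) n
  have anti : ∀ (η : ℕ → ℝ), (∀ k < r, η (k+1) ≤ η k) → ∀ i j, i ≤ j → j ≤ r → η j ≤ η i := by
    intro η hη i j hij
    induction j, hij using Nat.le_induction with
    | base => intro _; exact le_rfl
    | succ j hij ih =>
      intro hj
      exact (hη j hj).trans (ih (by omega))
  have key := main_real n r (fun i => f (z i)) (fun i => g (s i)) δm1 δ ε
    (fun k => Tg (ε k)) (fun k => Tf (δ k)) hD hδnn hεnn
    (fun i hi => by simpa only [hz0] using hδm _ (hzI i hi))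
    (fun k hk => g1 _ (hεnn k hk)) (fun k hk => f1 _ (hδnn k hk))
    (fun i j hij hj => g2 _ _ (hεnn j hj) (anti ε hεa i j hij hj))
    (fun i j hij hj => f2 _ _ (hδnn j hj) (anti δ hδa i j hij hj))
  have hsum : ∑ i : Fin n, f (ξ i.succ) * (g (t i.succ) - g (t i.castSucc)) - f c * (g d - g c)
      = ∑ i ∈ Finset.range n, (f (z (i+1)) - f (z 0)) * (g (s (i+1)) - g (s i)) := by
    have e : g d - g c = ∑ i ∈ Finset.range n, (g (s (i+1)) - g (s i)) := by
      rw [Finset.sum_range_sub (fun i => g (s i)), hsn, hs0]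
    rw [e, hz0, Finset.mul_sum, Finset.sum_range, Finset.sum_range, ← Finset.sum_sub_distrib]
    apply Finset.sum_congr rfl
    intro i _
    rw [← hs, ← hs, ← hz]
    simp only [Fin.val_succ, Fin.val_castSucc]
    ring
  rw [hsum]
  refine (ENNReal.ofReal_le_ofReal key).trans ?_
  refine ENNReal.ofReal_add_le.trans (add_le_add (ENNReal.ofReal_add_le.trans ?_) le_rfl)
  refine add_le_add ?_ ?_
  · refine (ofReal_sum_le' _ _).trans (Finset.sum_le_sum fun k hk => ?_)
    have hk' : k ≤ r := by have := Finset.mem_range.1 hk; omega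
    rw [ENNReal.ofReal_mul]
    · gcongr
      exact g3 _ (hεnn k hk') _ fun j hj v hv =>
        ch_truncVar g s n c d _ (hεnn k hk') hsmono hsI hv hj
    · refine mul_nonneg (by positivity) ?_
      split_ifs
      · exact hD
      · exact hδnn _ (by omega)
  · refine (ofReal_sum_le' _ _).trans (Finset.sum_le_sum fun k hk => ?_)
    have hk' : k ≤ r := by have := Finset.mem_range.1 hk; omega
    rw [ENNReal.ofReal_mul (mul_nonneg (by positivity) (hεnn k hk'))]
    gcongr
    exact f3 _ (hδnn k hk') _ fun j hj v hv =>
      ch_truncVar f z n c d _ (hδnn k hk') hzmono hzI hv hj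
end
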